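/- arXiv:1407.1222 — 2 statements merged into one kernel-verified Lean document; each statement's English description precedes it below -/
import Mathlib

section
/- For all real x ≥ 2, the double sum S(x) = Σ_{m ≤ x} Σ_{n ≤ x} τ_{1,2}(m·n) satisfies S(x) = C₁·x² + C₂·x^{3/2} + O(x^{10/7+ε}) for every ε > 0, where C₁ = Π_p (1 − p^{−1})² · Σ_{a,b ≥ 0} τ_{1,2}(p^{a+b}) p^{−(a+b)} (product over all primes p) and C₂ = 2·ζ(1/2) · Π_p (1 − p^{−1})²(1 − p^{−1/2}) · Σ_{a,b ≥ 0} τ_{1,2}(p^{a+b}) p^{−a−b/2}. -/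
open Filter Asymptotics

/-- `τ_{1,2}(n)` is the number of ordered pairs `(a,b)` of positive integers with `a·b² = n`. -/
noncomputable def tau12 (n : ℕ) : ℕ :=
  Nat.card {q : ℕ × ℕ // 0 < q.1 ∧ 0 < q.2 ∧ q.1 * q.2 ^ 2 = n}

open Classical in
/-- Indicator of the positive squares. -/
noncomputable def sqInd : ArithmeticFunction ℕ :=
  ⟨fun n => if n ≠ 0 ∧ IsSquare n then 1 else 0, by simp⟩

lemma isSquare_mul_coprime {m n : ℕ} (h : Nat.Coprime m n) :
    IsSquare (m * n) ↔ IsSquare m ∧ IsSquare n := by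
  constructor
  · rintro ⟨r, hr⟩
    have h1 : m * n = r ^ 2 := by rw [hr, sq]
    obtain ⟨a, ha⟩ := exists_eq_pow_of_mul_eq_pow (by rw [Nat.isUnit_iff]; exact h) h1
    obtain ⟨b, hb⟩ := exists_eq_pow_of_mul_eq_pow (a := n) (b := m)
      (by rw [Nat.isUnit_iff]; exact h.symm) (by rw [mul_comm]; exact h1)
    exact ⟨⟨a, by rw [ha, sq]⟩, ⟨b, by rw [hb, sq]⟩⟩
  · rintro ⟨h1, h2⟩
    exact h1.mul h2

lemma sqInd_mult : sqInd.IsMultiplicative := by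
  rw [ArithmeticFunction.IsMultiplicative.iff_ne_zero]
  refine ⟨by simp [sqInd], ?_⟩
  intro m n hm hn h
  simp only [sqInd, ArithmeticFunction.coe_mk, isSquare_mul_coprime h]
  by_cases h1 : IsSquare m <;> by_cases h2 : IsSquare n <;> simp [h1, h2, hm, hn]

lemma tau12_eq (n : ℕ) : tau12 n = ((ArithmeticFunction.zeta : ArithmeticFunction ℕ) * sqInd) n := by
  classical
  rw [ArithmeticFunction.mul_apply]
  have h1 : ∑ x ∈ n.divisorsAntidiagonal, (ArithmeticFunction.zeta x.1) * sqInd x.2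
      = (n.divisorsAntidiagonal.filter (fun x => IsSquare x.2)).card := by
    rw [Finset.card_filter]
    refine Finset.sum_congr rfl fun x hx => ?_
    have hx' := Nat.mem_divisorsAntidiagonal.1 hx
    have : x.1 ≠ 0 ∧ x.2 ≠ 0 := by
      constructor
      · intro h; apply hx'.2; rw [← hx'.1, h, zero_mul]
      · intro h; apply hx'.2; rw [← hx'.1, h, mul_zero]
    simp [sqInd, ArithmeticFunction.zeta_apply, this.1, this.2]
  rw [h1, tau12, ← Nat.card_eq_finsetCard]
  refine Nat.card_congr (Equiv.ofBijective
    (fun q => ⟨(q.1.1, q.1.2 ^ 2), ?_⟩) ⟨?_, ?_⟩)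
  · obtain ⟨⟨a, b⟩, ha, hb, hab⟩ := q
    simp only [Finset.mem_filter, Nat.mem_divisorsAntidiagonal]
    refine ⟨⟨hab, ?_⟩, ⟨b, by ring⟩⟩
    rw [← hab]; simp only at ha hb ⊢; positivity
  · rintro ⟨⟨a, b⟩, ha, hb, hab⟩ ⟨⟨a', b'⟩, ha', hb', hab'⟩ h
    simp only [Subtype.mk.injEq, Prod.mk.injEq] at h ⊢
    exact ⟨h.1, by simpa using h.2⟩
  · rintro ⟨⟨a, c⟩, h⟩
    simp only [Finset.mem_filter, Nat.mem_divisorsAntidiagonal] at h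
    obtain ⟨⟨h1, h2⟩, b, hb⟩ := h
    refine ⟨⟨(a, b), ?_, ?_, ?_⟩, ?_⟩
    · rcases Nat.eq_zero_or_pos a with h | h
      · subst h; simp at h1; exact absurd h1.symm h2
      · exact h
    · rcases Nat.eq_zero_or_pos b with h | h
      · subst h; subst hb; simp at h1; exact absurd h1.symm h2
      · exact h
    · simp only; rw [← h1, hb]; ring
    · simp [hb, sq]

lemma tau12_mul {m n : ℕ} (h : Nat.Coprime m n) : tau12 (m * n) = tau12 m * tau12 n := by
  rw [tau12_eq, tau12_eq, tau12_eq]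
  exact (ArithmeticFunction.isMultiplicative_zeta.mul sqInd_mult).map_mul_of_coprime h

lemma isSquare_prime_pow {p : ℕ} (hp : p.Prime) (i : ℕ) : IsSquare (p ^ i) ↔ Even i := by
  constructor
  · rintro ⟨r, hr⟩
    have hr0 : r ≠ 0 := by
      rintro rfl
      simp [hp.ne_zero] at hr
    have h := congrArg (fun k => k.factorization p) hr
    simp only [Nat.factorization_mul hr0 hr0, Nat.factorization_pow] at h
    simp [hp.factorization_self] at h
    exact ⟨_, h⟩
  · intro h
    exact h.isSquare_pow p

lemma card_even_range (k : ℕ) : ((Finset.range (k + 1)).filter Even).card = k / 2 + 1 := by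
  induction k with
  | zero => decide
  | succ k ih =>
    rw [Finset.range_add_one, Finset.filter_insert]
    split_ifs with h
    · rw [Finset.card_insert_of_notMem (by simp), ih]
      obtain ⟨j, hj⟩ := h
      omega
    · rw [ih]
      rw [Nat.not_even_iff_odd] at h
      obtain ⟨j, hj⟩ := h
      omega

lemma tau12_prime_pow {p : ℕ} (hp : p.Prime) (k : ℕ) : tau12 (p ^ k) = k / 2 + 1 := by
  classical
  rw [tau12_eq, mul_comm, ArithmeticFunction.mul_apply,
    Nat.sum_divisorsAntidiagonal (fun a b => sqInd a * ArithmeticFunction.zeta b),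
    Nat.sum_divisors_prime_pow hp, ← card_even_range k, Finset.card_filter]
  refine Finset.sum_congr rfl fun i hi => ?_
  have : p ^ k / p ^ i ≠ 0 := by
    have h1 : p ^ i ∣ p ^ k := Nat.pow_dvd_pow p (by simpa [Nat.lt_succ_iff] using hi)
    exact (Nat.div_pos (Nat.le_of_dvd (pow_pos hp.pos _) h1) (pow_pos hp.pos _)).ne'
  rw [ArithmeticFunction.zeta_apply, if_neg this]
  simp [sqInd, isSquare_prime_pow hp, hp.ne_zero]

lemma tau12_zero : tau12 0 = 0 := by
  rw [tau12_eq]; simp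

lemma tau12_one : tau12 1 = 1 := by
  simpa using tau12_prime_pow Nat.prime_two 0


lemma sum_divisors_split {p M A : ℕ} (hp : p.Prime) (hM : M ≠ 0) (hpM : ¬ p ∣ M) (hA : A ≠ 0)
    (h : ℕ → ℤ) (hh : ∀ d, p ^ 2 ∣ d → h d = 0) :
    ∑ d ∈ (p ^ A * M).divisors, h d = ∑ d ∈ M.divisors, (h d + h (p * d)) := by
  classical
  have hinj : Set.InjOn (fun d => p * d) (M.divisors : Set ℕ) := by
    intro a _ b _ hab
    exact Nat.eq_of_mul_eq_mul_left hp.pos hab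
  rw [Finset.sum_add_distrib, ← Finset.sum_image (f := h) (g := fun d => p * d) hinj,
    ← Finset.sum_union]
  · symm
    apply Finset.sum_subset
    · intro d hd
      rw [Finset.mem_union, Finset.mem_image] at hd
      rw [Nat.mem_divisors]
      refine ⟨?_, mul_ne_zero (pow_ne_zero _ hp.ne_zero) hM⟩
      rcases hd with hd | ⟨c, hc, rfl⟩
      · exact Dvd.dvd.mul_left (Nat.dvd_of_mem_divisors hd) _
      · exact mul_dvd_mul (dvd_pow_self p hA) (Nat.dvd_of_mem_divisors hc)
    · intro d hd hd'
      apply hh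
      rw [Finset.mem_union, Finset.mem_image, not_or] at hd'
      have hdv := Nat.dvd_of_mem_divisors hd
      have h1 : p ∣ d := by
        by_contra hpd
        apply hd'.1
        rw [Nat.mem_divisors]
        refine ⟨?_, hM⟩
        exact (((Nat.Prime.coprime_iff_not_dvd hp).2 hpd).symm.pow_right A).dvd_of_dvd_mul_left hdv
      obtain ⟨c, rfl⟩ := h1
      rw [sq]
      apply mul_dvd_mul_left
      by_contra hpc
      apply hd'.2
      refine ⟨c, ?_, rfl⟩
      rw [Nat.mem_divisors]
      refine ⟨?_, hM⟩
      exact (((Nat.Prime.coprime_iff_not_dvd hp).2 hpc).symm.pow_right A).dvd_of_dvd_mul_left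
        ((Dvd.intro_left p rfl).trans hdv)
  · rw [Finset.disjoint_left]
    intro d hd hd'
    rw [Finset.mem_image] at hd'
    obtain ⟨c, hc, rfl⟩ := hd'
    exact hpM ((Dvd.intro c rfl).trans (Nat.dvd_of_mem_divisors hd))

/-- `τ(m/k)` if `k ∣ m` and `0` otherwise. -/
noncomputable def tq (m k : ℕ) : ℤ := if k ∣ m then (tau12 (m / k) : ℤ) else 0

/-- The weights of the double Dirichlet series quotient. -/
noncomputable def GG (d e f : ℕ) : ℤ :=
  ArithmeticFunction.moebius (d * e * f) ^ 2 * ArithmeticFunction.moebius e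
    * ArithmeticFunction.moebius f

/-- local factor -/
def lt (a i : ℕ) : ℤ := if i ≤ a then (((a - i) / 2 + 1 : ℕ) : ℤ) else 0

lemma lt_identity (a b : ℕ) :
    lt a 0 * lt b 0 + lt a 1 * lt b 1 - lt a 2 * lt b 1 - lt a 1 * lt b 2
      = (((a + b) / 2 + 1 : ℕ) : ℤ) := by
  have key : ∀ c : ℕ, ∃ k : ℕ, (lt c 0 = k + 1 ∧ lt c 1 = k ∧ lt c 2 = k ∧ c = 2 * k) ∨
      (lt c 0 = k + 1 ∧ lt c 1 = k + 1 ∧ lt c 2 = k ∧ c = 2 * k + 1) := by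
    intro c
    refine ⟨c / 2, ?_⟩
    rcases Nat.even_or_odd' c with ⟨k, rfl | rfl⟩
    · left
      unfold lt
      refine ⟨?_, ?_, ?_, ?_⟩
      · simp
      · split_ifs <;> push_cast <;> omega
      · split_ifs <;> push_cast <;> omega
      · omega
    · right
      unfold lt
      refine ⟨?_, ?_, ?_, ?_⟩
      · simp
      · split_ifs <;> push_cast <;> omega
      · split_ifs <;> push_cast <;> omega
      · omega
  obtain ⟨k, ⟨h0, h1, h2, hk⟩ | ⟨h0, h1, h2, hk⟩⟩ := key a <;>
  obtain ⟨l, ⟨g0, g1, g2, hl⟩ | ⟨g0, g1, g2, hl⟩⟩ := key b <;>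
  rw [h0, h1, h2, g0, g1, g2]
  · have : (a + b) / 2 = k + l := by omega
    rw [this]; push_cast; ring
  · have : (a + b) / 2 = k + l := by omega
    rw [this]; push_cast; ring
  · have : (a + b) / 2 = k + l := by omega
    rw [this]; push_cast; ring
  · have : (a + b) / 2 = k + l + 1 := by omega
    rw [this]; push_cast; ring

lemma tq_split {p a m' k : ℕ} (i : ℕ) (hp : p.Prime) (hm : ¬ p ∣ m') (hk : ¬ p ∣ k) :
    tq (p ^ a * m') (p ^ i * k) = lt a i * tq m' k := by
  have hm0 : m' ≠ 0 := by rintro rfl; simp at hm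
  have ck : Nat.Coprime p k := (Nat.Prime.coprime_iff_not_dvd hp).2 hk
  have cm : Nat.Coprime p m' := (Nat.Prime.coprime_iff_not_dvd hp).2 hm
  unfold tq lt
  by_cases hi : i ≤ a
  · by_cases hkm : k ∣ m'
    · rw [if_pos hi, if_pos hkm, if_pos (mul_dvd_mul (pow_dvd_pow p hi) hkm),
        Nat.mul_div_mul_comm (pow_dvd_pow p hi) hkm, Nat.pow_div hi hp.pos, tau12_mul,
        tau12_prime_pow hp]
      · push_cast; ring
      · exact (cm.coprime_dvd_right (Nat.div_dvd_of_dvd hkm)).pow_left _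
    · rw [if_neg hkm, if_neg, mul_zero]
      intro h
      exact hkm ((ck.symm.pow_right a).dvd_of_dvd_mul_left ((Dvd.intro_left _ rfl).trans h))
  · rw [if_neg hi, if_neg, zero_mul]
    intro h
    apply hi
    have h1 : p ^ i ∣ p ^ a :=
      (cm.pow_left i).dvd_of_dvd_mul_right ((Dvd.intro _ rfl).trans h)
    exact (Nat.pow_dvd_pow_iff_le_right hp.one_lt).1 h1

lemma moebius_zero_of_sq_dvd {p n : ℕ} (hp : p.Prime) (h : p ^ 2 ∣ n) :
    ArithmeticFunction.moebius n = 0 := by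
  apply ArithmeticFunction.moebius_eq_zero_of_not_squarefree
  intro hs
  have := hs p (by rw [← sq]; exact h)
  exact hp.one_lt.ne' (Nat.isUnit_iff.1 this)

lemma moebius_prime_mul {p n : ℕ} (hp : p.Prime) (h : ¬ p ∣ n) :
    ArithmeticFunction.moebius (p * n) = - ArithmeticFunction.moebius n := by
  rw [ArithmeticFunction.isMultiplicative_moebius.map_mul_of_coprime
    ((Nat.Prime.coprime_iff_not_dvd hp).2 h), ArithmeticFunction.moebius_apply_prime hp]
  ring

lemma GG_zero {p d e f : ℕ} (hp : p.Prime) (h : p ^ 2 ∣ d * e * f) : GG d e f = 0 := by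
  unfold GG
  rw [moebius_zero_of_sq_dvd hp h]
  ring

/-- the summand -/
noncomputable def HH (m n d e f : ℕ) : ℤ :=
  GG d e f * tq m (d * e ^ 2 * f) * tq n (d * e * f ^ 2)

lemma HH_zero {m n p d e f : ℕ} (hp : p.Prime) (h : p ^ 2 ∣ d * e * f) : HH m n d e f = 0 := by
  unfold HH
  rw [GG_zero hp h]
  ring

lemma HH_local {m' n' p a b d e f : ℕ} (hp : p.Prime) (hm : ¬ p ∣ m') (hn : ¬ p ∣ n')
    (hd : ¬ p ∣ d) (he : ¬ p ∣ e) (hf : ¬ p ∣ f) :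
    HH (p ^ a * m') (p ^ b * n') d e f + HH (p ^ a * m') (p ^ b * n') (p * d) e f
    + HH (p ^ a * m') (p ^ b * n') d (p * e) f + HH (p ^ a * m') (p ^ b * n') d e (p * f)
    = (((a + b) / 2 + 1 : ℕ) : ℤ) * HH m' n' d e f := by
  have hk : ¬ p ∣ d * e ^ 2 * f := by
    intro h
    rcases hp.dvd_mul.1 h with h | h
    · rcases hp.dvd_mul.1 h with h | h
      · exact hd h
      · exact he (hp.dvd_of_dvd_pow h)
    · exact hf h
  have hl : ¬ p ∣ d * e * f ^ 2 := by
    intro h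
    rcases hp.dvd_mul.1 h with h | h
    · rcases hp.dvd_mul.1 h with h | h
      · exact hd h
      · exact he h
    · exact hf (hp.dvd_of_dvd_pow h)
  have hr : ¬ p ∣ d * e * f := by
    intro h
    rcases hp.dvd_mul.1 h with h | h
    · rcases hp.dvd_mul.1 h with h | h
      · exact hd h
      · exact he h
    · exact hf h
  have g1 : GG (p * d) e f = GG d e f := by
    unfold GG
    rw [show p * d * e * f = p * (d * e * f) by ring, moebius_prime_mul hp hr]
    ring
  have g2 : GG d (p * e) f = - GG d e f := by
    unfold GG
    rw [show d * (p * e) * f = p * (d * e * f) by ring, moebius_prime_mul hp hr,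
      moebius_prime_mul hp he]
    ring
  have g3 : GG d e (p * f) = - GG d e f := by
    unfold GG
    rw [show d * e * (p * f) = p * (d * e * f) by ring, moebius_prime_mul hp hr,
      moebius_prime_mul hp hf]
    ring
  unfold HH
  rw [g1, g2, g3, ← lt_identity a b]
  rw [show p * d * e ^ 2 * f = p ^ 1 * (d * e ^ 2 * f) by ring,
    show p * d * e * f ^ 2 = p ^ 1 * (d * e * f ^ 2) by ring,
    show d * (p * e) ^ 2 * f = p ^ 2 * (d * e ^ 2 * f) by ring,
    show d * (p * e) * f ^ 2 = p ^ 1 * (d * e * f ^ 2) by ring,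
    show d * e ^ 2 * (p * f) = p ^ 1 * (d * e ^ 2 * f) by ring,
    show d * e * (p * f) ^ 2 = p ^ 2 * (d * e * f ^ 2) by ring]
  rw [tq_split 1 hp hm hk, tq_split 2 hp hm hk, tq_split 1 hp hn hl, tq_split 2 hp hn hl]
  have e0 := tq_split (a := a) 0 hp hm hk
  have e1 := tq_split (a := b) 0 hp hn hl
  rw [pow_zero, one_mul] at e0 e1
  rw [e0, e1]
  ring

lemma tau12_mul_identity : ∀ N m n : ℕ, m ≠ 0 → n ≠ 0 → m * n = N →
    ∑ d ∈ N.divisors, ∑ e ∈ N.divisors, ∑ f ∈ N.divisors, HH m n d e f = (tau12 N : ℤ) := by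
  intro N
  induction N using Nat.strong_induction_on with
  | _ N ih =>
  intro m n hm hn hN
  by_cases h1 : N = 1
  · subst h1
    have hm1 : m = 1 := Nat.eq_one_of_mul_eq_one_right hN
    have hn1 : n = 1 := Nat.eq_one_of_mul_eq_one_left hN
    subst hm1 hn1
    simp [HH, GG, tq, tau12_one]
  obtain ⟨p, hp, hpN⟩ := Nat.exists_prime_and_dvd h1
  obtain ⟨a, m', hm', rfl⟩ := Nat.exists_eq_pow_mul_and_not_dvd hm p hp.ne_one
  obtain ⟨b, n', hn', rfl⟩ := Nat.exists_eq_pow_mul_and_not_dvd hn p hp.ne_one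
  have hm0 : m' ≠ 0 := by rintro rfl; simp at hm'
  have hn0 : n' ≠ 0 := by rintro rfl; simp at hn'
  have hpM : ¬ p ∣ m' * n' := by
    intro h
    rcases hp.dvd_mul.1 h with h | h
    · exact hm' h
    · exact hn' h
  have hN' : N = p ^ (a + b) * (m' * n') := by rw [← hN]; ring
  have hA : a + b ≠ 0 := by
    intro h
    rw [h, pow_zero, one_mul] at hN'
    rw [hN'] at hpN
    exact hpM hpN
  have hM0 : m' * n' ≠ 0 := mul_ne_zero hm0 hn0
  have hlt : m' * n' < N := by
    rw [hN']
    exact lt_mul_of_one_lt_left (Nat.pos_of_ne_zero hM0) (Nat.one_lt_pow hA hp.one_lt)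
  have IH := ih (m' * n') hlt m' n' hm0 hn0 rfl
  rw [hN', tau12_mul (((Nat.Prime.coprime_iff_not_dvd hp).2 hpM).pow_left _), tau12_prime_pow hp]
  rw [Nat.cast_mul, ← IH]
  rw [sum_divisors_split hp hM0 hpM hA]
  swap
  · intro d hd
    exact Finset.sum_eq_zero fun e _ => Finset.sum_eq_zero fun f _ =>
      HH_zero hp ((hd.mul_right e).mul_right f)
  rw [Finset.mul_sum]
  refine Finset.sum_congr rfl fun d hd => ?_
  rw [← Finset.sum_add_distrib]
  rw [sum_divisors_split hp hM0 hpM hA]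
  swap
  · intro e he
    rw [← Finset.sum_add_distrib]
    exact Finset.sum_eq_zero fun f _ => by
      rw [HH_zero hp ((he.mul_left d).mul_right f), HH_zero hp ((he.mul_left (p * d)).mul_right f),
        add_zero]
  rw [Finset.mul_sum]
  refine Finset.sum_congr rfl fun e he => ?_
  simp only [← Finset.sum_add_distrib]
  rw [sum_divisors_split hp hM0 hpM hA]
  swap
  · intro f hf
    rw [HH_zero hp (hf.mul_left _), HH_zero hp (hf.mul_left _), HH_zero hp (hf.mul_left _),
      HH_zero hp (hf.mul_left _)]
    ring
  rw [Finset.mul_sum]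
  refine Finset.sum_congr rfl fun f hf => ?_
  have nd : ∀ c ∈ (m' * n').divisors, ¬ p ∣ c := fun c hc h =>
    hpM (h.trans (Nat.dvd_of_mem_divisors hc))
  rw [← HH_local hp hm' hn' (nd d hd) (nd e he) (nd f hf)]
  rw [HH_zero (d := p * d) (e := p * e) (f := f) hp ⟨d * e * f, by ring⟩,
    HH_zero (d := p * d) (e := p * e) (f := p * f) hp ⟨p * d * e * f, by ring⟩,
    HH_zero (d := p * d) (e := e) (f := p * f) hp ⟨d * e * f, by ring⟩,
    HH_zero (d := d) (e := p * e) (f := p * f) hp ⟨d * e * f, by ring⟩]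
  ring


/-- Summatory function of `tau12`. -/
noncomputable def TT (y : ℝ) : ℝ := ∑ n ∈ Finset.Icc 1 ⌊y⌋₊, (tau12 n : ℝ)

lemma sum_tq (x : ℝ) (k : ℕ) (hk : k ≠ 0) :
    ∑ m ∈ Finset.Icc 1 ⌊x⌋₊, (tq m k : ℝ) = TT (x / k) := by
  classical
  unfold TT
  rw [Nat.floor_div_natCast]
  have hinj : Set.InjOn (fun j => k * j) ((Finset.Icc 1 (⌊x⌋₊ / k) : Finset ℕ) : Set ℕ) := by
    intro a _ b _ hab
    exact Nat.eq_of_mul_eq_mul_left (Nat.pos_of_ne_zero hk) hab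
  have h1 : ∑ n ∈ Finset.Icc 1 (⌊x⌋₊ / k), (tau12 n : ℝ)
      = ∑ n ∈ Finset.Icc 1 (⌊x⌋₊ / k), ((tq (k * n) k : ℤ) : ℝ) := by
    refine Finset.sum_congr rfl fun n _ => ?_
    unfold tq
    rw [if_pos (Dvd.intro n rfl), Nat.mul_div_cancel_left n (Nat.pos_of_ne_zero hk)]
    simp
  rw [h1, ← Finset.sum_image (f := fun n => ((tq n k : ℤ) : ℝ)) (g := fun j => k * j) hinj]
  symm
  apply Finset.sum_subset
  · intro n hn
    rw [Finset.mem_image] at hn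
    obtain ⟨j, hj, rfl⟩ := hn
    rw [Finset.mem_Icc] at hj ⊢
    refine ⟨Nat.mul_pos (Nat.pos_of_ne_zero hk) hj.1, ?_⟩
    calc k * j ≤ k * (⌊x⌋₊ / k) := Nat.mul_le_mul_left k hj.2
      _ ≤ ⌊x⌋₊ := Nat.mul_div_le _ _
  · intro n hn hn'
    unfold tq
    rw [if_neg, Int.cast_zero]
    rintro ⟨j, rfl⟩
    apply hn'
    rw [Finset.mem_image]
    refine ⟨j, ?_, rfl⟩
    rw [Finset.mem_Icc] at hn ⊢
    refine ⟨?_, ?_⟩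
    · rcases Nat.eq_zero_or_pos j with h | h
      · subst h; simp at hn
      · exact h
    · rw [Nat.le_div_iff_mul_le (Nat.pos_of_ne_zero hk), mul_comm]
      exact hn.2

lemma tq_zero_of_gt {m k : ℕ} (hm : m ≠ 0) (h : m < k) : tq m k = 0 := by
  unfold tq
  rw [if_neg]
  intro hd
  exact absurd (Nat.le_of_dvd (Nat.pos_of_ne_zero hm) hd) (not_le.2 h)

lemma HH_dvd {m n d e f : ℕ} (h : HH m n d e f ≠ 0) :
    d * e ^ 2 * f ∣ m ∧ d * e * f ^ 2 ∣ n := by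
  unfold HH tq at h
  constructor
  · by_contra hc
    rw [if_neg hc] at h
    simp at h
  · by_contra hc
    rw [if_neg hc] at h
    simp at h

lemma tau12_box {X m n : ℕ} (hm : m ∈ Finset.Icc 1 X) (hn : n ∈ Finset.Icc 1 X) :
    ∑ q ∈ Finset.Icc 1 X ×ˢ (Finset.Icc 1 X ×ˢ Finset.Icc 1 X), HH m n q.1 q.2.1 q.2.2
      = (tau12 (m * n) : ℤ) := by
  classical
  rw [Finset.mem_Icc] at hm hn
  have hm0 : m ≠ 0 := by omega
  have hn0 : n ≠ 0 := by omega
  have hN0 : m * n ≠ 0 := mul_ne_zero hm0 hn0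
  rw [← tau12_mul_identity (m * n) m n hm0 hn0 rfl]
  have e1 : ∑ d ∈ (m * n).divisors, ∑ e ∈ (m * n).divisors, ∑ f ∈ (m * n).divisors, HH m n d e f
      = ∑ q ∈ (m * n).divisors ×ˢ ((m * n).divisors ×ˢ (m * n).divisors),
        HH m n q.1 q.2.1 q.2.2 := by
    rw [Finset.sum_product]
    refine Finset.sum_congr rfl fun d _ => ?_
    rw [Finset.sum_product]
  rw [e1]
  refine Finset.sum_congr_of_eq_on_inter ?_ ?_ (fun _ _ _ => rfl)
  · rintro ⟨d, e, f⟩ h1 h2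
    by_contra hne
    apply h2
    obtain ⟨ha, hb⟩ := HH_dvd hne
    simp only [Finset.mem_product, Nat.mem_divisors]
    have hd : d ∣ d * e ^ 2 * f := ⟨e ^ 2 * f, by ring⟩
    have he : e ∣ d * e ^ 2 * f := ⟨d * e * f, by ring⟩
    have hf : f ∣ d * e ^ 2 * f := ⟨d * e ^ 2, by ring⟩
    exact ⟨⟨(hd.trans ha).mul_right n, hN0⟩, ⟨(he.trans ha).mul_right n, hN0⟩,
      ⟨(hf.trans ha).mul_right n, hN0⟩⟩
  · rintro ⟨d, e, f⟩ h1 h2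
    by_contra hne
    apply h2
    obtain ⟨ha, hb⟩ := HH_dvd hne
    simp only [Finset.mem_product, Finset.mem_Icc]
    have hd : d ∣ d * e ^ 2 * f := ⟨e ^ 2 * f, by ring⟩
    have he : e ∣ d * e ^ 2 * f := ⟨d * e * f, by ring⟩
    have hf : f ∣ d * e ^ 2 * f := ⟨d * e ^ 2, by ring⟩
    have key : ∀ c, c ∣ m → 1 ≤ c ∧ c ≤ X := fun c hc =>
      ⟨Nat.pos_of_dvd_of_pos hc (by omega), (Nat.le_of_dvd (by omega) hc).trans hm.2⟩
    exact ⟨key d (hd.trans ha), key e (he.trans ha), key f (hf.trans ha)⟩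

/-- first modulus -/
noncomputable def kk (q : ℕ × ℕ × ℕ) : ℕ := q.1 * q.2.1 ^ 2 * q.2.2
/-- second modulus -/
noncomputable def ll (q : ℕ × ℕ × ℕ) : ℕ := q.1 * q.2.1 * q.2.2 ^ 2
/-- the weight as a real function on triples -/
noncomputable def gg (q : ℕ × ℕ × ℕ) : ℝ := (GG q.1 q.2.1 q.2.2 : ℝ)

lemma gg_ne_zero {q : ℕ × ℕ × ℕ} (h : gg q ≠ 0) : q.1 ≠ 0 ∧ q.2.1 ≠ 0 ∧ q.2.2 ≠ 0 := by
  unfold gg GG at h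
  refine ⟨?_, ?_, ?_⟩ <;> intro h0 <;> apply h <;> rw [h0] <;> simp

lemma gg_abs_le (q : ℕ × ℕ × ℕ) : |gg q| ≤ 1 := by
  have : ∀ n : ℕ, |((ArithmeticFunction.moebius n : ℤ) : ℝ)| ≤ 1 := by
    intro n
    exact_mod_cast ArithmeticFunction.abs_moebius_le_one
  unfold gg GG
  push_cast
  rw [abs_mul, abs_mul, abs_pow]
  have h1 := this (q.1 * q.2.1 * q.2.2)
  have h2 := this q.2.1
  have h3 := this q.2.2
  exact mul_le_one₀ (mul_le_one₀ (pow_le_one₀ (abs_nonneg _) h1) (abs_nonneg _) h2)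
    (abs_nonneg _) h3

lemma TT_of_lt_one {y : ℝ} (h : y < 1) : TT y = 0 := by
  unfold TT
  rw [Nat.floor_eq_zero.2 h]
  simp

lemma sum_tau12_eq_tsum (x : ℝ) :
    HasSum (fun q : ℕ × ℕ × ℕ => gg q * TT (x / kk q) * TT (x / ll q))
      (∑ m ∈ Finset.Icc 1 ⌊x⌋₊, ∑ n ∈ Finset.Icc 1 ⌊x⌋₊, (tau12 (m * n) : ℝ)) := by
  classical
  set X := ⌊x⌋₊ with hX
  have e1 : ∑ m ∈ Finset.Icc 1 X, ∑ n ∈ Finset.Icc 1 X, (tau12 (m * n) : ℝ)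
      = ∑ q ∈ Finset.Icc 1 X ×ˢ (Finset.Icc 1 X ×ˢ Finset.Icc 1 X),
        gg q * TT (x / kk q) * TT (x / ll q) := by
    have h1 : ∀ m ∈ Finset.Icc 1 X, ∀ n ∈ Finset.Icc 1 X, (tau12 (m * n) : ℝ)
        = ∑ q ∈ Finset.Icc 1 X ×ˢ (Finset.Icc 1 X ×ˢ Finset.Icc 1 X),
          gg q * (tq m (kk q) : ℝ) * (tq n (ll q) : ℝ) := by
      intro m hm n hn
      have := tau12_box hm hn
      have h2 : (tau12 (m * n) : ℝ) = (((tau12 (m * n) : ℕ) : ℤ) : ℝ) := by simp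
      rw [h2, ← this]
      push_cast [HH, gg, kk, ll]
      rfl
    rw [Finset.sum_congr rfl fun m hm => Finset.sum_congr rfl fun n hn => h1 m hm n hn]
    rw [Finset.sum_congr rfl fun m _ => Finset.sum_comm]
    rw [Finset.sum_comm]
    refine Finset.sum_congr rfl fun q hq => ?_
    simp only [Finset.mem_product, Finset.mem_Icc] at hq
    have q1 : q.1 ≠ 0 := by omega
    have q2 : q.2.1 ≠ 0 := by omega
    have q3 : q.2.2 ≠ 0 := by omega
    have hk : kk q ≠ 0 := by unfold kk; positivity
    have hl : ll q ≠ 0 := by unfold ll; positivity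
    rw [← sum_tq x _ hk, ← sum_tq x _ hl, mul_assoc, Finset.sum_mul_sum, Finset.mul_sum]
    refine Finset.sum_congr rfl fun m _ => ?_
    rw [Finset.mul_sum]
    refine Finset.sum_congr rfl fun n _ => ?_
    ring
  rw [e1]
  apply hasSum_sum_of_ne_finset_zero
  intro q hq
  by_cases hg : gg q = 0
  · rw [hg]; ring
  obtain ⟨q1, q2, q3⟩ := gg_ne_zero hg
  have hkX : X < kk q := by
    by_contra hc
    apply hq
    have hkpos : 0 < kk q := by unfold kk; positivity
    have key : ∀ c, c ∣ kk q → c ≠ 0 → 1 ≤ c ∧ c ≤ X := fun c hc' hc0 =>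
      ⟨Nat.pos_of_ne_zero hc0, (Nat.le_of_dvd hkpos hc').trans (not_lt.1 hc)⟩
    simp only [Finset.mem_product, Finset.mem_Icc]
    exact ⟨key _ ⟨q.2.1 ^ 2 * q.2.2, by unfold kk; ring⟩ q1,
      key _ ⟨q.1 * q.2.1 * q.2.2, by unfold kk; ring⟩ q2,
      key _ ⟨q.1 * q.2.1 ^ 2, by unfold kk; ring⟩ q3⟩
  have : x / kk q < 1 := by
    rw [div_lt_one (by exact_mod_cast (Nat.zero_le X).trans_lt hkX)]
    exact (Nat.floor_lt' (by omega)).1 hkX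
  rw [TT_of_lt_one this]
  ring


/-- Summand of the continuation of `(1-s)ζ(s)+1` to `Re s > 0`. -/
noncomputable def zF (n : ℕ) (s : ℂ) : ℂ :=
  (1 - s) * (((n : ℝ) + 1 : ℝ) : ℂ) ^ (-s) -
    ((((n : ℝ) + 2 : ℝ) : ℂ) ^ (1 - s) - (((n : ℝ) + 1 : ℝ) : ℂ) ^ (1 - s))

lemma zF_bound (a : ℝ) (ha : 0 < a) (s : ℂ) (hs : 0 < s.re) :
    ‖((a + 1 : ℝ) : ℂ) ^ (1 - s) - (a : ℂ) ^ (1 - s) - (1 - s) * (a : ℂ) ^ (-s)‖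
      ≤ ‖1 - s‖ * ‖s‖ * a ^ (-s.re - 1) := by
  have hder : ∀ (r : ℂ) (t : ℝ), 0 < t →
      HasDerivAt (fun y : ℝ => (y : ℂ) ^ r) (r * (t : ℂ) ^ (r - 1)) t := by
    intro r t ht
    have h := ((hasDerivAt_id (t : ℂ)).cpow_const (c := r)
      (Complex.ofReal_mem_slitPlane.2 ht)).comp_ofReal
    simpa using h
  set C := ‖1 - s‖ * ‖s‖ * a ^ (-s.re - 1) with hC
  have hC0 : 0 ≤ C := by positivity
  -- first derivative difference
  have h1 : ∀ t ∈ Set.Icc a (a + 1),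
      ‖(1 - s) * (t : ℂ) ^ (-s) - (1 - s) * (a : ℂ) ^ (-s)‖ ≤ C * (t - a) := by
    refine norm_image_sub_le_of_norm_deriv_le_segment'
      (f := fun t : ℝ => (1 - s) * (t : ℂ) ^ (-s))
      (f' := fun t : ℝ => (1 - s) * (-s * (t : ℂ) ^ (-s - 1))) ?_ ?_
    · intro t ht
      exact ((hder (-s) t (ha.trans_le ht.1)).const_mul (1 - s)).hasDerivWithinAt
    · intro t ht
      have ht0 := ha.trans_le ht.1
      rw [norm_mul, norm_mul, norm_neg, Complex.norm_cpow_eq_rpow_re_of_pos ht0, hC, ← mul_assoc]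
      refine mul_le_mul_of_nonneg_left ?_ (by positivity)
      simp only [Complex.sub_re, Complex.neg_re, Complex.one_re]
      exact Real.rpow_le_rpow_of_nonpos ha ht.1 (by linarith)
  have h2 := norm_image_sub_le_of_norm_deriv_le_segment' (a := a) (b := a + 1) (C := C)
      (f := fun t : ℝ => (t : ℂ) ^ (1 - s) - (1 - s) * (a : ℂ) ^ (-s) * (t : ℂ))
      (f' := fun t : ℝ => (1 - s) * (t : ℂ) ^ (1 - s - 1) - (1 - s) * (a : ℂ) ^ (-s) * 1) ?_ ?_
      (a + 1) ⟨by linarith, le_refl _⟩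
  · convert h2 using 1
    · congr 1
      push_cast
      ring
    · ring
  · intro t ht
    refine HasDerivAt.hasDerivWithinAt ?_
    refine (hder (1 - s) t (ha.trans_le ht.1)).sub ?_
    exact (Complex.ofRealCLM.hasDerivAt (x := t)).const_mul _
  · intro t ht
    rw [show 1 - s - 1 = -s by ring, mul_one]
    refine (h1 t ⟨ht.1, ht.2.le⟩).trans ?_
    nlinarith [ht.1, ht.2]

lemma zF_norm (n : ℕ) (s : ℂ) (hs : 0 < s.re) :
    ‖zF n s‖ ≤ ‖1 - s‖ * ‖s‖ * ((n : ℝ) + 1) ^ (-s.re - 1) := by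
  have h := zF_bound ((n : ℝ) + 1) (by positivity) s hs
  rw [← norm_neg] at h
  refine le_trans (le_of_eq ?_) h
  congr 1
  unfold zF
  rw [show (n : ℝ) + 1 + 1 = (n : ℝ) + 2 by ring]
  ring

lemma summable_shift {δ : ℝ} (hδ : 0 < δ) : Summable fun n : ℕ => ((n : ℝ) + 1) ^ (-δ - 1) := by
  have h := (Real.summable_nat_rpow (p := -δ - 1)).2 (by linarith)
  have := (summable_nat_add_iff 1).2 h
  simpa using this

lemma zF_sum (N : ℕ) (s : ℂ) : ∑ n ∈ Finset.range N, zF n s =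
    (1 - s) * ∑ n ∈ Finset.range N, (((n : ℝ) + 1 : ℝ) : ℂ) ^ (-s)
      - ((((N : ℝ) + 1 : ℝ) : ℂ) ^ (1 - s) - 1) := by
  induction N with
  | zero => simp
  | succ N ih =>
    rw [Finset.sum_range_succ, ih, Finset.sum_range_succ, zF]
    push_cast
    rw [show (N : ℂ) + 1 + 1 = N + 2 by ring]
    ring

lemma zF_summable (s : ℂ) (hs : 0 < s.re) : Summable fun n => zF n s := by
  refine Summable.of_norm_bounded ?_ (fun n => zF_norm n s hs)
  exact (summable_shift hs).mul_left _

lemma zF_tsum_of_one_lt (s : ℂ) (hs : 1 < s.re) :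
    ∑' n, zF n s = (1 - s) * riemannZeta s + 1 := by
  have h1 := (zF_summable s (by linarith)).hasSum.tendsto_sum_nat
  refine tendsto_nhds_unique h1 ?_
  have h2 : Tendsto (fun N : ℕ => ∑ n ∈ Finset.range N, (((n : ℝ) + 1 : ℝ) : ℂ) ^ (-s)) atTop
      (nhds (riemannZeta s)) := by
    have hsum : Summable fun n : ℕ => (((n : ℝ) + 1 : ℝ) : ℂ) ^ (-s) := by
      refine Summable.of_norm_bounded (summable_shift (δ := s.re - 1) (by linarith)) ?_
      intro n
      rw [Complex.norm_cpow_eq_rpow_re_of_pos (by positivity)]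
      simp
    have h3 := hsum.hasSum.tendsto_sum_nat
    rw [zeta_eq_tsum_one_div_nat_add_one_cpow hs]
    convert h3 using 3
    funext n
    rw [Complex.cpow_neg]
    push_cast
    simp
  have h4 : Tendsto (fun N : ℕ => (((N : ℝ) + 1 : ℝ) : ℂ) ^ (1 - s)) atTop (nhds 0) := by
    rw [tendsto_zero_iff_norm_tendsto_zero]
    have h5 := (tendsto_rpow_neg_atTop (y := s.re - 1) (by linarith)).comp
      (tendsto_atTop_add_const_right atTop (1 : ℝ) tendsto_natCast_atTop_atTop)
    refine h5.congr fun N => ?_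
    rw [Complex.norm_cpow_eq_rpow_re_of_pos (by positivity)]
    simp
  have h6 := (h2.const_mul (1 - s)).sub (h4.sub (tendsto_const_nhds (x := (1 : ℂ))))
  rw [show (1 - s) * riemannZeta s - (0 - 1) = (1 - s) * riemannZeta s + 1 by ring] at h6
  refine h6.congr fun N => ?_
  rw [zF_sum]

lemma zF_tsum_half : ∑' n, zF n (1 / 2) = 1 / 2 * riemannZeta (1 / 2) + 1 := by
  set U : Set ℂ := {c : ℂ | (1 / 4 : ℝ) < c.re} ∩ Metric.ball 0 3 with hU
  have hUo : IsOpen U := (isOpen_lt continuous_const Complex.continuous_re).inter Metric.isOpen_ball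
  have hUc : IsPreconnected U :=
    ((convex_halfSpace_re_gt (1 / 4)).inter (convex_ball 0 3)).isPreconnected
  have hd : DifferentiableOn ℂ (fun s => ∑' n, zF n s) U := by
    refine Complex.differentiableOn_tsum_of_summable_norm
      (u := fun n : ℕ => 4 * 3 * ((n : ℝ) + 1) ^ (-(1 / 4 : ℝ) - 1))
      ((summable_shift (by norm_num)).mul_left _) ?_ hUo ?_
    · intro n
      unfold zF
      have e1 : (((n : ℝ) + 1 : ℝ) : ℂ) ≠ 0 := by
        rw [Complex.ofReal_ne_zero]; positivity
      have e2 : (((n : ℝ) + 2 : ℝ) : ℂ) ≠ 0 := by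
        rw [Complex.ofReal_ne_zero]; positivity
      refine Differentiable.differentiableOn ?_
      have d1 : Differentiable ℂ fun s : ℂ => 1 - s := by fun_prop
      exact (d1.mul (differentiable_neg.const_cpow (Or.inl e1))).sub
        ((d1.const_cpow (Or.inl e2)).sub (d1.const_cpow (Or.inl e1)))
    · intro n s hs
      have hs1 : (1 / 4 : ℝ) < s.re := hs.1
      have hs2 : ‖s‖ < 3 := by simpa using hs.2
      refine (zF_norm n s (by linarith)).trans ?_
      have h1 : ‖1 - s‖ ≤ 4 := by
        refine (norm_sub_le _ _).trans ?_
        rw [norm_one]; linarith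
      have h2 : ((n : ℝ) + 1) ^ (-s.re - 1) ≤ ((n : ℝ) + 1) ^ (-(1 / 4 : ℝ) - 1) := by
        refine Real.rpow_le_rpow_of_exponent_le ?_ (by linarith)
        have := Nat.cast_nonneg (α := ℝ) n
        linarith
      gcongr
  have hg : DifferentiableOn ℂ (fun s => 1 - riemannZeta₁ s) U :=
    (Differentiable.const_sub differentiable_riemannZeta₁ 1).differentiableOn
  have h2U : (2 : ℂ) ∈ U := by
    refine ⟨?_, ?_⟩
    · simp only [Set.mem_ofPred_eq, Complex.re_ofNat]; norm_num
    · simp; norm_num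
  have hhU : (1 / 2 : ℂ) ∈ U := by
    refine ⟨?_, ?_⟩
    · simp only [Set.mem_ofPred_eq]; norm_num
    · simp; norm_num
  have hz : ∀ s : ℂ, s ≠ 1 → 1 - riemannZeta₁ s = (1 - s) * riemannZeta s + 1 := by
    intro s hs
    rw [riemannZeta_eq_inv_sub_mul hs]
    have : s - 1 ≠ 0 := sub_ne_zero.2 hs
    field_simp
    ring
  have key := (hd.analyticOnNhd hUo).eqOn_of_preconnected_of_eventuallyEq
    (hg.analyticOnNhd hUo) hUc h2U ?_ hhU
  · simp only at key
    rw [key, hz _ (by norm_num)]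
    norm_num
  · have : {c : ℂ | (1 : ℝ) < c.re} ∈ nhds (2 : ℂ) :=
      (isOpen_lt continuous_const Complex.continuous_re).mem_nhds (by simp)
    filter_upwards [this] with s hs
    rw [zF_tsum_of_one_lt s hs, hz]
    rintro rfl
    simp at hs

lemma sqrt_step (n : ℕ) : 1 / √((n : ℝ) + 1) ≤ 2 * (√((n : ℝ) + 1) - √n) ∧
    2 * (√((n : ℝ) + 2) - √((n : ℝ) + 1)) ≤ 1 / √((n : ℝ) + 1) := by
  have h0 : (0 : ℝ) ≤ n := Nat.cast_nonneg n
  have a0 : 0 ≤ √(n : ℝ) := Real.sqrt_nonneg _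
  have a1 : 0 < √((n : ℝ) + 1) := Real.sqrt_pos.2 (by linarith)
  have s0 := Real.sq_sqrt h0
  have s1 := Real.sq_sqrt (show (0 : ℝ) ≤ (n : ℝ) + 1 by linarith)
  have s2 := Real.sq_sqrt (show (0 : ℝ) ≤ (n : ℝ) + 2 by linarith)
  constructor
  · rw [div_le_iff₀ a1]
    nlinarith [sq_nonneg (√((n : ℝ) + 1) - √n)]
  · rw [le_div_iff₀ a1]
    nlinarith [sq_nonneg (√((n : ℝ) + 2) - √((n : ℝ) + 1))]

lemma exists_zeta_half : ∃ z : ℝ, (z : ℂ) = riemannZeta (1 / 2) ∧ ∀ A : ℕ, A ≠ 0 →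
    z ≤ ∑ n ∈ Finset.range A, 1 / √((n : ℝ) + 1) - 2 * √A ∧
    ∑ n ∈ Finset.range A, 1 / √((n : ℝ) + 1) - 2 * √A ≤ z + 1 / √A := by
  have hconj := riemannZeta_conj (1 / 2)
  have h12 : (starRingEnd ℂ) (1 / 2 : ℂ) = 1 / 2 := by
    rw [map_div₀, map_one, map_ofNat]
  rw [h12] at hconj
  obtain ⟨z, hz⟩ := Complex.conj_eq_iff_real.1 hconj.symm
  refine ⟨z, hz.symm, ?_⟩
  have hlim := (zF_summable (1 / 2) (by norm_num)).hasSum.tendsto_sum_nat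
  rw [zF_tsum_half, hz] at hlim
  have hlim2 : Tendsto (fun A : ℕ => ∑ n ∈ Finset.range A, 1 / √((n : ℝ) + 1) - 2 * √((A : ℝ) + 1))
      atTop (nhds z) := by
    have h1 : Tendsto (fun A : ℕ => (((1 / 2 * ∑ n ∈ Finset.range A, 1 / √((n : ℝ) + 1) -
        (√((A : ℝ) + 1) - 1) : ℝ)) : ℂ)) atTop (nhds (((1 / 2 * z + 1 : ℝ)) : ℂ)) := by
      push_cast at hlim ⊢
      refine hlim.congr fun A => ?_
      rw [zF_sum]
      have e : ∀ y : ℝ, 0 ≤ y → ((√y : ℝ) : ℂ) = (y : ℂ) ^ (1 / 2 : ℂ) := by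
        intro y hy
        rw [Real.sqrt_eq_rpow, Complex.ofReal_cpow hy]
        norm_num
      have hA : (0 : ℝ) ≤ (A : ℝ) + 1 := by positivity
      rw [e _ hA]
      have e2 : ∀ n : ℕ, (1 : ℂ) / ((√((n : ℝ) + 1) : ℝ) : ℂ)
          = (((n : ℝ) + 1 : ℝ) : ℂ) ^ (-(1 / 2) : ℂ) := by
        intro n
        rw [e _ (by positivity), Complex.cpow_neg, one_div]
      rw [Finset.sum_congr rfl fun n _ => e2 n]
      norm_num
    rw [Filter.tendsto_ofReal_iff] at h1
    have h2 := (h1.sub_const 1).const_mul 2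
    rw [show 2 * (1 / 2 * z + 1 - 1) = z by ring] at h2
    refine h2.congr fun A => ?_
    ring
  have hinv : Tendsto (fun A : ℕ => 2 * (√((A : ℝ) + 1) - √A)) atTop (nhds 0) := by
    have hs : Tendsto (fun A : ℕ => 2 * (1 / √(A : ℝ))) atTop (nhds 0) := by
      have := (Real.tendsto_sqrt_atTop.comp (tendsto_natCast_atTop_atTop (R := ℝ))).inv_tendsto_atTop
      have := this.const_mul 2
      rw [mul_zero] at this
      refine this.congr fun A => ?_
      simp
    refine squeeze_zero' (Eventually.of_forall fun A => ?_) ?_ hs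
    · have := Real.sqrt_le_sqrt (show (A : ℝ) ≤ (A : ℝ) + 1 by linarith)
      linarith
    · filter_upwards [eventually_ge_atTop 1] with A hA
      obtain ⟨B, rfl⟩ := Nat.exists_eq_add_of_le' hA
      have := (sqrt_step B).2
      have h0 : 0 ≤ 1 / √((B : ℝ) + 1) := by positivity
      push_cast
      rw [show (B : ℝ) + 1 + 1 = B + 2 by ring]
      linarith
  have hlim3 : Tendsto (fun A : ℕ => ∑ n ∈ Finset.range A, 1 / √((n : ℝ) + 1) - 2 * √(A : ℝ))
      atTop (nhds z) := by
    have := hlim2.add hinv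
    rw [add_zero] at this
    refine this.congr fun A => ?_
    ring
  intro A hA
  constructor
  · refine Antitone.le_of_tendsto (antitone_nat_of_succ_le fun n => ?_) hlim3 A
    rw [Finset.sum_range_succ]
    have := (sqrt_step n).1
    push_cast
    linarith
  · have hmono : Monotone fun A : ℕ =>
        ∑ n ∈ Finset.range A, 1 / √((n : ℝ) + 1) - 2 * √((A : ℝ) + 1) := by
      refine monotone_nat_of_le_succ fun n => ?_
      rw [Finset.sum_range_succ]
      have := (sqrt_step n).2
      push_cast
      rw [show (n : ℝ) + 1 + 1 = n + 2 by ring]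
      linarith
    have h := hmono.ge_of_tendsto hlim2 A
    obtain ⟨B, rfl⟩ := Nat.exists_eq_succ_of_ne_zero hA
    have h2 := (sqrt_step B).2
    push_cast at h ⊢
    rw [show (B : ℝ) + 1 + 1 = B + 2 by ring] at h
    linarith


lemma tau12_eq_sum {n Y : ℕ} (hn : n ∈ Finset.Icc 1 Y) :
    tau12 n = ∑ b ∈ Finset.Icc 1 Y, ∑ a ∈ Finset.Icc 1 Y, if a * b ^ 2 = n then 1 else 0 := by
  classical
  rw [Finset.mem_Icc] at hn
  rw [← Finset.sum_product' (s := Finset.Icc 1 Y) (t := Finset.Icc 1 Y)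
    (f := fun b a => if a * b ^ 2 = n then 1 else 0), ← Finset.card_filter, tau12,
    ← Nat.card_eq_finsetCard]
  refine Nat.card_congr (Equiv.ofBijective (fun q => ⟨(q.1.2, q.1.1), ?_⟩) ⟨?_, ?_⟩)
  · obtain ⟨⟨a, b⟩, ha, hb, hab⟩ := q
    simp only at ha hb hab
    simp only [Finset.mem_filter, Finset.mem_product, Finset.mem_Icc]
    have h1 : a ≤ n := by rw [← hab]; exact Nat.le_mul_of_pos_right a (by positivity)
    have h2 : b ≤ n := by
      rw [← hab]; nlinarith [Nat.mul_le_mul ha (Nat.mul_le_mul hb (le_refl b))]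
    exact ⟨⟨⟨hb, h2.trans hn.2⟩, ⟨ha, h1.trans hn.2⟩⟩, hab⟩
  · rintro ⟨⟨a, b⟩, ha, hb, hab⟩ ⟨⟨a', b'⟩, ha', hb', hab'⟩ h
    simp only [Subtype.mk.injEq, Prod.mk.injEq] at h ⊢
    exact ⟨h.2, h.1⟩
  · rintro ⟨⟨b, a⟩, h⟩
    simp only [Finset.mem_filter, Finset.mem_product, Finset.mem_Icc] at h
    exact ⟨⟨(a, b), h.1.2.1, h.1.1.1, h.2⟩, rfl⟩

lemma sum_tau12_count (Y : ℕ) : ∑ n ∈ Finset.Icc 1 Y, tau12 n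
    = ∑ b ∈ Finset.Icc 1 Y, ∑ a ∈ Finset.Icc 1 Y, if a * b ^ 2 ≤ Y then 1 else 0 := by
  rw [Finset.sum_congr rfl fun n hn => tau12_eq_sum hn, Finset.sum_comm]
  refine Finset.sum_congr rfl fun b hb => ?_
  rw [Finset.sum_comm]
  refine Finset.sum_congr rfl fun a ha => ?_
  rw [Finset.mem_Icc] at ha hb
  rw [Finset.sum_ite_eq]
  have : 1 ≤ a * b ^ 2 := Nat.mul_pos ha.1 (pow_pos hb.1 2)
  simp [this]

lemma hyperbola {Y B : ℕ} (hB : 1 ≤ B) (hBY : B ≤ Y) :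
    ∑ n ∈ Finset.Icc 1 Y, tau12 n + (Y / B ^ 2) * B
      = ∑ b ∈ Finset.Icc 1 B, Y / b ^ 2 + ∑ a ∈ Finset.Icc 1 (Y / B ^ 2), Nat.sqrt (Y / a) := by
  classical
  rw [sum_tau12_count]
  have hsplit : Finset.Icc 1 Y = Finset.Icc 1 B ∪ Finset.Ioc B Y := by
    ext c; simp only [Finset.mem_Icc, Finset.mem_union, Finset.mem_Ioc]; omega
  have hdisj : Disjoint (Finset.Icc 1 B) (Finset.Ioc B Y) := by
    rw [Finset.disjoint_left]; intro c hc hc'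
    simp only [Finset.mem_Icc, Finset.mem_Ioc] at hc hc'; omega
  have h1 : ∑ b ∈ Finset.Icc 1 Y, ∑ a ∈ Finset.Icc 1 Y, (if a * b ^ 2 ≤ Y then 1 else 0)
      = ∑ b ∈ Finset.Icc 1 B, ∑ a ∈ Finset.Icc 1 Y, (if a * b ^ 2 ≤ Y then 1 else 0)
      + ∑ b ∈ Finset.Ioc B Y, ∑ a ∈ Finset.Icc 1 Y, (if a * b ^ 2 ≤ Y then 1 else 0) := by
    rw [← Finset.sum_union hdisj, ← hsplit]
  have h2 : ∑ b ∈ Finset.Icc 1 B, ∑ a ∈ Finset.Icc 1 Y, (if a * b ^ 2 ≤ Y then 1 else 0)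
      = ∑ b ∈ Finset.Icc 1 B, Y / b ^ 2 := by
    refine Finset.sum_congr rfl fun b hb => ?_
    rw [Finset.mem_Icc] at hb
    rw [← Finset.card_filter]
    have hb2 : 0 < b ^ 2 := pow_pos hb.1 2
    have : (Finset.Icc 1 Y).filter (fun a => a * b ^ 2 ≤ Y) = Finset.Icc 1 (Y / b ^ 2) := by
      ext a
      rw [Finset.mem_filter, Finset.mem_Icc, Finset.mem_Icc, Nat.le_div_iff_mul_le hb2]
      constructor
      · rintro ⟨h, h'⟩; exact ⟨h.1, h'⟩
      · rintro ⟨h, h'⟩; exact ⟨⟨h, (Nat.le_mul_of_pos_right a hb2).trans h'⟩, h'⟩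
    rw [this, Nat.card_Icc, Nat.add_sub_cancel]
  have h3 : ∑ b ∈ Finset.Ioc B Y, ∑ a ∈ Finset.Icc 1 Y, (if a * b ^ 2 ≤ Y then 1 else 0)
      = ∑ a ∈ Finset.Icc 1 (Y / B ^ 2), (Nat.sqrt (Y / a) - B) := by
    rw [Finset.sum_comm]
    have hB2 : 0 < B ^ 2 := pow_pos hB 2
    have hsub : Finset.Icc 1 (Y / B ^ 2) ⊆ Finset.Icc 1 Y :=
      Finset.Icc_subset_Icc_right (Nat.div_le_self _ _)
    rw [← Finset.sum_subset hsub]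
    · refine Finset.sum_congr rfl fun a ha => ?_
      rw [Finset.mem_Icc] at ha
      rw [← Finset.card_filter]
      have : (Finset.Ioc B Y).filter (fun b => a * b ^ 2 ≤ Y)
          = Finset.Ioc B (Nat.sqrt (Y / a)) := by
        ext b
        rw [Finset.mem_filter, Finset.mem_Ioc, Finset.mem_Ioc, Nat.le_sqrt',
          Nat.le_div_iff_mul_le ha.1, mul_comm a]
        constructor
        · rintro ⟨h, h'⟩; exact ⟨h.1, h'⟩
        · rintro ⟨h, h'⟩
          refine ⟨⟨h, ?_⟩, h'⟩
          refine le_trans ?_ h'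
          refine le_trans ?_ (Nat.le_mul_of_pos_right _ ha.1)
          exact Nat.le_self_pow two_ne_zero b
      rw [this, Nat.card_Ioc]
    · intro a ha ha'
      refine Finset.sum_eq_zero fun b hb => ?_
      rw [if_neg]
      intro h
      apply ha'
      rw [Finset.mem_Icc] at ha ⊢
      rw [Finset.mem_Ioc] at hb
      refine ⟨ha.1, ?_⟩
      rw [Nat.le_div_iff_mul_le hB2]
      exact le_trans (Nat.mul_le_mul_left a (Nat.pow_le_pow_left hb.1.le 2)) h
  have h4 : ∑ a ∈ Finset.Icc 1 (Y / B ^ 2), Nat.sqrt (Y / a)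
      = ∑ a ∈ Finset.Icc 1 (Y / B ^ 2), (Nat.sqrt (Y / a) - B) + (Y / B ^ 2) * B := by
    have : (Y / B ^ 2) * B = ∑ a ∈ Finset.Icc 1 (Y / B ^ 2), B := by
      rw [Finset.sum_const, Nat.card_Icc]; simp
    rw [this, ← Finset.sum_add_distrib]
    refine Finset.sum_congr rfl fun a ha => ?_
    rw [Finset.mem_Icc] at ha
    have : B ≤ Nat.sqrt (Y / a) := by
      rw [Nat.le_sqrt', Nat.le_div_iff_mul_le ha.1, mul_comm]
      rw [← Nat.le_div_iff_mul_le (pow_pos hB 2)]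
      exact ha.2
    omega
  rw [h1, h2, h3, h4]
  ring

lemma sum_inv_sq (B : ℕ) (hB : 1 ≤ B) :
    Real.pi ^ 2 / 6 - 1 / B ≤ ∑ b ∈ Finset.Icc 1 B, 1 / (b : ℝ) ^ 2 ∧
    ∑ b ∈ Finset.Icc 1 B, 1 / (b : ℝ) ^ 2 ≤ Real.pi ^ 2 / 6 - 1 / B + 1 / (B : ℝ) ^ 2 := by
  have hlim := hasSum_zeta_two.tendsto_sum_nat
  have hlim' : Tendsto (fun n : ℕ => ∑ b ∈ Finset.Icc 1 (n + 1), 1 / (b : ℝ) ^ 2) atTop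
      (nhds (Real.pi ^ 2 / 6)) := by
    have := hlim.comp (tendsto_add_atTop_nat 2)
    refine this.congr fun n => ?_
    simp only [Function.comp]
    rw [Finset.sum_range_succ', Finset.range_eq_Ico, Finset.sum_Ico_add' (fun b : ℕ => 1 / (b : ℝ) ^ 2)]
    simp
    rfl
  have hz : Tendsto (fun n : ℕ => 1 / ((n : ℝ) + 1)) atTop (nhds 0) :=
    tendsto_one_div_add_atTop_nhds_zero_nat
  have hz' : Tendsto (fun n : ℕ => 1 / ((n : ℝ) + 2)) atTop (nhds 0) := by
    have := hz.comp (tendsto_add_atTop_nat 1)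
    refine this.congr fun n => ?_
    simp only [Function.comp]
    push_cast
    ring_nf
  obtain ⟨n, rfl⟩ := Nat.exists_eq_add_of_le' hB
  have hn : (0 : ℝ) ≤ n := Nat.cast_nonneg n
  constructor
  · have anti : Antitone fun n : ℕ =>
        ∑ b ∈ Finset.Icc 1 (n + 1), 1 / (b : ℝ) ^ 2 + 1 / ((n : ℝ) + 1) := by
      refine antitone_nat_of_succ_le fun n => ?_
      rw [Finset.sum_Icc_succ_top (by omega)]
      push_cast
      have h0 : (0 : ℝ) ≤ n := Nat.cast_nonneg n
      have : 1 / ((n : ℝ) + 1 + 1) ^ 2 + 1 / ((n : ℝ) + 1 + 1) ≤ 1 / ((n : ℝ) + 1) := by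
        rw [div_add_div _ _ (by positivity) (by positivity), div_le_div_iff₀ (by positivity) (by positivity)]
        nlinarith [pow_nonneg h0 2, pow_nonneg h0 3]
      linarith
    have h2 := hlim'.add hz
    rw [add_zero] at h2
    have := anti.le_of_tendsto h2 n
    push_cast at this ⊢
    linarith
  · have mono : Monotone fun n : ℕ =>
        ∑ b ∈ Finset.Icc 1 (n + 1), 1 / (b : ℝ) ^ 2 + 1 / ((n : ℝ) + 2) := by
      refine monotone_nat_of_le_succ fun n => ?_
      rw [Finset.sum_Icc_succ_top (show 1 ≤ n + 1 + 1 by omega)]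
      push_cast
      have h0 : (0 : ℝ) ≤ n := Nat.cast_nonneg n
      have : 1 / ((n : ℝ) + 2) ≤ 1 / ((n : ℝ) + 1 + 1) ^ 2 + 1 / ((n : ℝ) + 1 + 2) := by
        rw [div_add_div _ _ (by positivity) (by positivity), div_le_div_iff₀ (by positivity) (by positivity)]
        nlinarith [pow_nonneg h0 2, pow_nonneg h0 3]
      linarith
    have h2 := hlim'.add hz'
    rw [add_zero] at h2
    have := mono.ge_of_tendsto h2 n
    push_cast at this ⊢
    have h3 : 1 / ((n : ℝ) + 1) - 1 / ((n : ℝ) + 1) ^ 2 ≤ 1 / ((n : ℝ) + 2) := by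
      rw [div_sub_div _ _ (by positivity) (by positivity), div_le_div_iff₀ (by positivity) (by positivity)]
      nlinarith [pow_nonneg hn 2, pow_nonneg hn 3]
    linarith

lemma nat_div_bounds (Y k : ℕ) (hk : 1 ≤ k) :
    ((Y / k : ℕ) : ℝ) ≤ (Y : ℝ) / k ∧ (Y : ℝ) / k - 1 ≤ ((Y / k : ℕ) : ℝ) := by
  have hk' : (0 : ℝ) < k := by exact_mod_cast hk
  refine ⟨Nat.cast_div_le, ?_⟩
  have h := Nat.lt_div_mul_add (a := Y) hk
  have h' : (Y : ℝ) < ((Y / k : ℕ) : ℝ) * k + k := by exact_mod_cast h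
  rw [sub_le_iff_le_add, div_le_iff₀ hk']
  linarith

lemma nat_sqrt_bounds (Y a : ℕ) (ha : 1 ≤ a) :
    ((Nat.sqrt (Y / a) : ℕ) : ℝ) ≤ √Y * (1 / √a) ∧
    √Y * (1 / √a) - 1 ≤ ((Nat.sqrt (Y / a) : ℕ) : ℝ) := by
  have ha' : (0 : ℝ) < a := by exact_mod_cast ha
  have e : √(Y : ℝ) * (1 / √(a : ℝ)) = √((Y : ℝ) / a) := by
    rw [Real.sqrt_div (Nat.cast_nonneg _)]; ring
  obtain ⟨h1, h2⟩ := nat_div_bounds Y a ha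
  rw [e]
  constructor
  · apply Real.le_sqrt_of_sq_le
    refine le_trans ?_ h1
    exact_mod_cast Nat.sqrt_le' (Y / a)
  · rw [sub_le_iff_le_add]
    apply Real.sqrt_le_iff.2
    refine ⟨by positivity, ?_⟩
    have h3 := Nat.succ_le_succ_sqrt' (Y / a)
    have h4 : ((Y / a : ℕ) : ℝ) + 1 ≤ (((Nat.sqrt (Y / a) : ℕ) : ℝ) + 1) ^ 2 := by
      exact_mod_cast h3
    linarith

lemma sum_Icc_range (A : ℕ) (f : ℝ → ℝ) :
    ∑ a ∈ Finset.Icc 1 A, f a = ∑ n ∈ Finset.range A, f ((n : ℝ) + 1) := by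
  induction A with
  | zero => simp
  | succ A ih => rw [Finset.sum_Icc_succ_top (by omega), ih, Finset.sum_range_succ]; push_cast; rfl

lemma TT_param (z : ℝ) (hz : ∀ A : ℕ, A ≠ 0 →
    z ≤ ∑ n ∈ Finset.range A, 1 / √((n : ℝ) + 1) - 2 * √A ∧
    ∑ n ∈ Finset.range A, 1 / √((n : ℝ) + 1) - 2 * √A ≤ z + 1 / √A)
    (Y B : ℕ) (hB : 1 ≤ B) (hBY : B ^ 2 ≤ Y) :
    |(∑ n ∈ Finset.Icc 1 Y, (tau12 n : ℝ)) - Real.pi ^ 2 / 6 * Y - z * √Y|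
      ≤ Y / (B : ℝ) ^ 2 + 2 * B + √Y / √((Y / B ^ 2 : ℕ) : ℝ) + ((Y / B ^ 2 : ℕ) : ℝ) := by
  have hyp := hyperbola hB ((Nat.le_self_pow two_ne_zero B).trans hBY)
  have hyp' : (∑ n ∈ Finset.Icc 1 Y, (tau12 n : ℝ)) + ((Y / B ^ 2 : ℕ) : ℝ) * B
      = ∑ b ∈ Finset.Icc 1 B, ((Y / b ^ 2 : ℕ) : ℝ)
        + ∑ a ∈ Finset.Icc 1 (Y / B ^ 2), ((Nat.sqrt (Y / a) : ℕ) : ℝ) := by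
    exact_mod_cast hyp
  have hB2 : 1 ≤ B ^ 2 := Nat.one_le_pow _ _ hB
  obtain ⟨hA1, hA2⟩ := nat_div_bounds Y (B ^ 2) hB2
  have hA0 : Y / B ^ 2 ≠ 0 := (Nat.div_pos hBY hB2).ne'
  set A := Y / B ^ 2 with hA
  obtain ⟨z1, z2⟩ := hz A hA0
  obtain ⟨s1, s2⟩ := sum_inv_sq B hB
  have hY0 : (0 : ℝ) ≤ Y := Nat.cast_nonneg Y
  have hBpos : (0 : ℝ) < B := by exact_mod_cast hB
  -- the first sum
  have f1 : ∑ b ∈ Finset.Icc 1 B, ((Y / b ^ 2 : ℕ) : ℝ) ≤ Y * ∑ b ∈ Finset.Icc 1 B, 1 / (b : ℝ) ^ 2 := by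
    rw [Finset.mul_sum]
    refine Finset.sum_le_sum fun b hb => ?_
    rw [Finset.mem_Icc] at hb
    have := (nat_div_bounds Y (b ^ 2) (Nat.one_le_pow _ _ hb.1)).1
    push_cast at this ⊢
    rw [mul_one_div]; exact this
  have f2 : Y * ∑ b ∈ Finset.Icc 1 B, 1 / (b : ℝ) ^ 2 - B ≤ ∑ b ∈ Finset.Icc 1 B, ((Y / b ^ 2 : ℕ) : ℝ) := by
    have : (B : ℝ) = ∑ b ∈ Finset.Icc 1 B, (1 : ℝ) := by simp
    rw [this, Finset.mul_sum, ← Finset.sum_sub_distrib]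
    refine Finset.sum_le_sum fun b hb => ?_
    rw [Finset.mem_Icc] at hb
    have := (nat_div_bounds Y (b ^ 2) (Nat.one_le_pow _ _ hb.1)).2
    push_cast at this ⊢
    rw [mul_one_div]; exact this
  have er := sum_Icc_range A (fun t => 1 / √t)
  have g1 : ∑ a ∈ Finset.Icc 1 A, ((Nat.sqrt (Y / a) : ℕ) : ℝ)
      ≤ √Y * ∑ n ∈ Finset.range A, 1 / √((n : ℝ) + 1) := by
    rw [← er, Finset.mul_sum]
    refine Finset.sum_le_sum fun a ha => ?_
    rw [Finset.mem_Icc] at ha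
    exact (nat_sqrt_bounds Y a ha.1).1
  have g2 : √Y * ∑ n ∈ Finset.range A, 1 / √((n : ℝ) + 1) - A
      ≤ ∑ a ∈ Finset.Icc 1 A, ((Nat.sqrt (Y / a) : ℕ) : ℝ) := by
    have : (A : ℝ) = ∑ b ∈ Finset.Icc 1 A, (1 : ℝ) := by simp
    rw [this, ← er, Finset.mul_sum, ← Finset.sum_sub_distrib]
    refine Finset.sum_le_sum fun a ha => ?_
    rw [Finset.mem_Icc] at ha
    exact (nat_sqrt_bounds Y a ha.1).2
  have hsY : 0 ≤ √(Y : ℝ) := Real.sqrt_nonneg _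
  have hsA : 0 ≤ √(A : ℝ) := Real.sqrt_nonneg _
  have sqY := Real.sq_sqrt hY0
  have sqA := Real.sq_sqrt (Nat.cast_nonneg (α := ℝ) A)
  set U := √(Y : ℝ) with hU
  set V := √(A : ℝ) with hV
  -- square completion
  have sc : -(Y / (B : ℝ)) + 2 * U * V - A * B = - (B * (U / B - V) ^ 2) := by
    rw [← sqY, ← sqA]; field_simp; ring
  have d1 : V ≤ U / B := by
    apply Real.sqrt_le_iff.2
    refine ⟨by positivity, ?_⟩
    rw [div_pow, sqY]
    push_cast at hA1
    exact hA1
  have d2 : U / B ≤ V + 1 := by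
    refine abs_le_of_sq_le_sq' ?_ (by positivity) |>.2
    rw [div_pow, sqY]
    push_cast at hA2
    nlinarith
  have d3 : (U / B - V) ^ 2 ≤ 1 := by
    have h0 : 0 ≤ U / B - V := by linarith
    have h1 : U / B - V ≤ 1 := by linarith
    exact pow_le_one₀ h0 h1
  have d4 : B * (U / B - V) ^ 2 ≤ B := by nlinarith
  have d5 : 0 ≤ B * (U / B - V) ^ 2 := by positivity
  -- multiply
  have m1 := mul_le_mul_of_nonneg_left s1 hY0
  have m2 := mul_le_mul_of_nonneg_left s2 hY0
  have m3 := mul_le_mul_of_nonneg_left z1 hsY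
  have m4 := mul_le_mul_of_nonneg_left z2 hsY
  have e1 : (Y : ℝ) * (Real.pi ^ 2 / 6 - 1 / B) = Real.pi ^ 2 / 6 * Y - Y / B := by ring
  have e2 : (Y : ℝ) * (Real.pi ^ 2 / 6 - 1 / B + 1 / (B : ℝ) ^ 2)
      = Real.pi ^ 2 / 6 * Y - Y / B + Y / (B : ℝ) ^ 2 := by ring
  have e3 : U * (z + 1 / V) = z * U + U / V := by ring
  have p1 : 0 ≤ (Y : ℝ) / (B : ℝ) ^ 2 := by positivity
  have p2 : 0 ≤ U / V := by positivity
  have p3 : (0 : ℝ) ≤ A := Nat.cast_nonneg A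
  rw [e1] at m1
  rw [e2] at m2
  rw [e3, mul_sub] at m4
  rw [mul_sub] at m3
  rw [abs_le]
  constructor <;> linarith


lemma TT_nat_bound (z : ℝ) (hz : ∀ A : ℕ, A ≠ 0 →
    z ≤ ∑ n ∈ Finset.range A, 1 / √((n : ℝ) + 1) - 2 * √A ∧
    ∑ n ∈ Finset.range A, 1 / √((n : ℝ) + 1) - 2 * √A ≤ z + 1 / √A)
    (Y : ℕ) (hY : 1 ≤ Y) :
    |(∑ n ∈ Finset.Icc 1 Y, (tau12 n : ℝ)) - Real.pi ^ 2 / 6 * Y - z * √Y|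
      ≤ 12 * (Y : ℝ) ^ (1 / 3 : ℝ) := by
  have hY1 : (1 : ℝ) ≤ Y := by exact_mod_cast hY
  have hY0 : (0 : ℝ) ≤ Y := by linarith
  set c := (Y : ℝ) ^ (1 / 3 : ℝ) with hc
  have hc1 : 1 ≤ c := Real.one_le_rpow hY1 (by norm_num)
  have hc3 : c ^ 3 = Y := by
    rw [hc, ← Real.rpow_natCast, ← Real.rpow_mul hY0]
    norm_num
  set B := ⌊c⌋₊ with hB
  have hB1 : 1 ≤ B := Nat.le_floor (by simpa using hc1)
  have hB1' : (1 : ℝ) ≤ B := by exact_mod_cast hB1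
  have hBc : (B : ℝ) ≤ c := Nat.floor_le (by linarith)
  have hcB : c < B + 1 := Nat.lt_floor_add_one c
  have hc2B : c ≤ 2 * B := by linarith
  have hBY : B ^ 2 ≤ Y := by
    have : (B : ℝ) ^ 2 ≤ Y := by
      rw [← hc3]
      calc (B : ℝ) ^ 2 ≤ c ^ 2 := by gcongr
        _ ≤ c ^ 3 := pow_le_pow_right₀ hc1 (by norm_num)
    exact_mod_cast this
  refine (TT_param z hz Y B hB1 hBY).trans ?_
  obtain ⟨hA1, hA2⟩ := nat_div_bounds Y (B ^ 2) (Nat.one_le_pow _ _ hB1)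
  have hA0 : 1 ≤ Y / B ^ 2 := Nat.div_pos hBY (Nat.one_le_pow _ _ hB1)
  have hA0' : (1 : ℝ) ≤ ((Y / B ^ 2 : ℕ) : ℝ) := by exact_mod_cast hA0
  set A := Y / B ^ 2 with hA
  push_cast at hA1 hA2
  have hBp : (0 : ℝ) < (B : ℝ) ^ 2 := by positivity
  have h1 : (Y : ℝ) / (B : ℝ) ^ 2 ≤ 4 * c := by
    rw [div_le_iff₀ hBp, ← hc3]
    have : c ^ 2 ≤ (2 * B) ^ 2 := by gcongr
    nlinarith
  have h2 : c ≤ (Y : ℝ) / (B : ℝ) ^ 2 := by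
    rw [le_div_iff₀ hBp, ← hc3]
    have : (B : ℝ) ^ 2 ≤ c ^ 2 := by gcongr
    nlinarith
  have h3 : c ≤ 2 * A := by linarith
  have h4 : √(Y : ℝ) / √(A : ℝ) ≤ 2 * c := by
    rw [← Real.sqrt_div hY0]
    apply Real.sqrt_le_iff.2
    refine ⟨by linarith, ?_⟩
    rw [div_le_iff₀ (by linarith), ← hc3]
    have : 0 ≤ c ^ 2 := by positivity
    nlinarith
  linarith

lemma exists_TT_bound : ∃ z C : ℝ, (z : ℂ) = riemannZeta (1 / 2) ∧ 0 ≤ C ∧ ∀ y : ℝ, 0 < y →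
    |TT y - Real.pi ^ 2 / 6 * y - z * y ^ (1 / 2 : ℝ)| ≤ C * y ^ (1 / 3 : ℝ) ∧
    |TT y - Real.pi ^ 2 / 6 * y| ≤ C * y ^ (2 / 3 : ℝ) := by
  obtain ⟨z, hz1, hz⟩ := exists_zeta_half
  set P := Real.pi ^ 2 / 6 with hP
  have hP0 : 0 ≤ P := by positivity
  have hz0 := abs_nonneg z
  refine ⟨z, 12 + P + 2 * |z|, hz1, by positivity, ?_⟩
  intro y hy
  rcases lt_or_ge y 1 with hy1 | hy1
  · rw [TT_of_lt_one hy1]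
    have e1 : y ≤ y ^ (1 / 3 : ℝ) := by
      conv_lhs => rw [← Real.rpow_one y]
      exact Real.rpow_le_rpow_of_exponent_ge hy hy1.le (by norm_num)
    have e2 : y ^ (1 / 2 : ℝ) ≤ y ^ (1 / 3 : ℝ) :=
      Real.rpow_le_rpow_of_exponent_ge hy hy1.le (by norm_num)
    have e3 : y ≤ y ^ (2 / 3 : ℝ) := by
      conv_lhs => rw [← Real.rpow_one y]
      exact Real.rpow_le_rpow_of_exponent_ge hy hy1.le (by norm_num)
    have p1 : 0 ≤ y ^ (1 / 3 : ℝ) := by positivity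
    have p2 : 0 ≤ y ^ (1 / 2 : ℝ) := by positivity
    constructor
    · have : |0 - P * y - z * y ^ (1 / 2 : ℝ)| ≤ P * y + |z| * y ^ (1 / 2 : ℝ) := by
        refine (abs_sub _ _).trans ?_
        rw [zero_sub, abs_neg, abs_mul, abs_mul, abs_of_nonneg hP0, abs_of_pos hy, abs_of_nonneg p2]
      nlinarith
    · rw [zero_sub, abs_neg, abs_of_nonneg (by positivity)]
      nlinarith
  · have hY : 1 ≤ ⌊y⌋₊ := Nat.le_floor (by simpa using hy1)
    have hb := TT_nat_bound z hz ⌊y⌋₊ hY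
    change |TT y - _ - _| ≤ _ at hb
    have hf1 : (⌊y⌋₊ : ℝ) ≤ y := Nat.floor_le hy.le
    have hf2 : y < ⌊y⌋₊ + 1 := Nat.lt_floor_add_one y
    have hY' : (1 : ℝ) ≤ ⌊y⌋₊ := by exact_mod_cast hY
    set Y : ℝ := (⌊y⌋₊ : ℝ) with hYd
    have hr : Y ^ (1 / 3 : ℝ) ≤ y ^ (1 / 3 : ℝ) :=
      Real.rpow_le_rpow (by linarith) hf1 (by norm_num)
    have hone : 1 ≤ y ^ (1 / 3 : ℝ) := Real.one_le_rpow hy1 (by norm_num)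
    have hs1 : √Y ≤ √y := Real.sqrt_le_sqrt hf1
    have hs2 : √y ≤ √Y + 1 := by
      apply Real.sqrt_le_iff.2
      refine ⟨by positivity, ?_⟩
      nlinarith [Real.sq_sqrt (show (0 : ℝ) ≤ Y by linarith), Real.sqrt_nonneg Y]
    have hd : |z * (√y - √Y)| ≤ |z| := by
      rw [abs_mul, abs_of_nonneg (show 0 ≤ √y - √Y by linarith)]
      nlinarith
    have hd2 : |P * (y - Y)| ≤ P := by
      rw [abs_mul, abs_of_nonneg hP0, abs_of_nonneg (show 0 ≤ y - Y by linarith)]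
      nlinarith
    have first : |TT y - P * y - z * y ^ (1 / 2 : ℝ)| ≤ (12 + P + |z|) * y ^ (1 / 3 : ℝ) := by
      rw [← Real.sqrt_eq_rpow]
      have e : TT y - P * y - z * √y = (TT y - P * Y - z * √Y) - P * (y - Y) - z * (√y - √Y) := by
        ring
      rw [e]
      refine (abs_sub _ _).trans ?_
      refine (add_le_add_left (abs_sub _ _) _).trans ?_
      nlinarith
    refine ⟨first.trans ?_, ?_⟩
    · nlinarith
    · have e2 : y ^ (1 / 2 : ℝ) ≤ y ^ (2 / 3 : ℝ) :=
        Real.rpow_le_rpow_of_exponent_le hy1 (by norm_num)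
      have e3 : y ^ (1 / 3 : ℝ) ≤ y ^ (2 / 3 : ℝ) :=
        Real.rpow_le_rpow_of_exponent_le hy1 (by norm_num)
      have e4 : |z * y ^ (1 / 2 : ℝ)| = |z| * y ^ (1 / 2 : ℝ) := by
        rw [abs_mul, abs_of_nonneg (show 0 ≤ y ^ (1 / 2 : ℝ) by positivity)]
      have e : TT y - P * y = (TT y - P * y - z * y ^ (1 / 2 : ℝ)) + z * y ^ (1 / 2 : ℝ) := by ring
      rw [e]
      refine (abs_add_le _ _).trans ?_
      rw [e4]
      have k1 : (12 + P + |z|) * y ^ (1 / 3 : ℝ) ≤ (12 + P + |z|) * y ^ (2 / 3 : ℝ) := by gcongr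
      have k2 : |z| * y ^ (1 / 2 : ℝ) ≤ |z| * y ^ (2 / 3 : ℝ) := by gcongr
      nlinarith

/-- the pointwise product estimate -/
lemma TT_product {P z C a b : ℝ} (hP : 0 ≤ P) (hC : 0 ≤ C) (ha : 0 < a) (hb : 0 < b)
    (h : ∀ y : ℝ, 0 < y → |TT y - P * y - z * y ^ (1 / 2 : ℝ)| ≤ C * y ^ (1 / 3 : ℝ) ∧
      |TT y - P * y| ≤ C * y ^ (2 / 3 : ℝ)) :
    |TT a * TT b - P ^ 2 * (a * b) - P * z * (a * b ^ (1 / 2 : ℝ))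
        - P * z * (a ^ (1 / 2 : ℝ) * b)|
      ≤ P * C * (a * b ^ (1 / 3 : ℝ)) + P * C * (a ^ (1 / 3 : ℝ) * b)
        + C ^ 2 * (a ^ (2 / 3 : ℝ) * b ^ (2 / 3 : ℝ)) := by
  obtain ⟨a1, a2⟩ := h a ha
  obtain ⟨b1, b2⟩ := h b hb
  have e : TT a * TT b - P ^ 2 * (a * b) - P * z * (a * b ^ (1 / 2 : ℝ))
        - P * z * (a ^ (1 / 2 : ℝ) * b)
      = P * a * (TT b - P * b - z * b ^ (1 / 2 : ℝ)) + P * b * (TT a - P * a - z * a ^ (1 / 2 : ℝ))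
        + (TT a - P * a) * (TT b - P * b) := by ring
  rw [e]
  refine (abs_add_le _ _).trans ?_
  refine add_le_add ((abs_add_le _ _).trans (add_le_add ?_ ?_)) ?_
  · rw [abs_mul, abs_of_nonneg (by positivity : 0 ≤ P * a)]
    refine (mul_le_mul_of_nonneg_left b1 (by positivity)).trans (le_of_eq ?_)
    ring
  · rw [abs_mul, abs_of_nonneg (by positivity : 0 ≤ P * b)]
    refine (mul_le_mul_of_nonneg_left a1 (by positivity)).trans (le_of_eq ?_)
    ring
  · rw [abs_mul]
    refine (mul_le_mul a2 b2 (abs_nonneg _) (by positivity)).trans (le_of_eq ?_)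
    ring



/-- general term of the constant series -/
noncomputable def kterm (s w : ℝ) (q : ℕ × ℕ × ℕ) : ℝ :=
  gg q * ((kk q : ℝ) ^ (-s) * (ll q : ℝ) ^ (-w))

lemma kl_rpow (s w : ℝ) (d e f : ℕ) (hd : d ≠ 0) (he : e ≠ 0) (hf : f ≠ 0) :
    (kk (d, e, f) : ℝ) ^ (-s) * (ll (d, e, f) : ℝ) ^ (-w)
      = (d : ℝ) ^ (-(s + w)) * ((e : ℝ) ^ (-(2 * s + w)) * (f : ℝ) ^ (-(s + 2 * w))) := by
  have hd' : (0 : ℝ) < d := by positivity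
  have he' : (0 : ℝ) < e := by positivity
  have hf' : (0 : ℝ) < f := by positivity
  unfold kk ll
  push_cast
  rw [Real.mul_rpow (by positivity) (by positivity), Real.mul_rpow (by positivity) (by positivity),
    Real.mul_rpow (by positivity) (by positivity), Real.mul_rpow (by positivity) (by positivity),
    ← Real.rpow_natCast_mul he'.le, ← Real.rpow_natCast_mul hf'.le]
  have h1 : (d : ℝ) ^ (-(s + w)) = (d : ℝ) ^ (-s) * (d : ℝ) ^ (-w) := by
    rw [← Real.rpow_add hd']; ring_nf
  have h2 : (e : ℝ) ^ (-(2 * s + w)) = (e : ℝ) ^ ((2 : ℕ) * -s) * (e : ℝ) ^ (-w) := by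
    rw [← Real.rpow_add he']; push_cast; ring_nf
  have h3 : (f : ℝ) ^ (-(s + 2 * w)) = (f : ℝ) ^ (-s) * (f : ℝ) ^ ((2 : ℕ) * -w) := by
    rw [← Real.rpow_add hf']; push_cast; ring_nf
  rw [h1, h2, h3]
  ring

lemma summable_kterm_abs (s w : ℝ) (h1 : 1 < s + w) (h2 : 1 < 2 * s + w) (h3 : 1 < s + 2 * w) :
    Summable fun q : ℕ × ℕ × ℕ => |gg q| * ((kk q : ℝ) ^ (-s) * (ll q : ℝ) ^ (-w)) := by
  have a1 : Summable fun n : ℕ => (n : ℝ) ^ (-(s + w)) := Real.summable_nat_rpow.2 (by linarith)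
  have a2 : Summable fun n : ℕ => (n : ℝ) ^ (-(2 * s + w)) :=
    Real.summable_nat_rpow.2 (by linarith)
  have a3 : Summable fun n : ℕ => (n : ℝ) ^ (-(s + 2 * w)) :=
    Real.summable_nat_rpow.2 (by linarith)
  have a4 := a2.mul_of_nonneg a3 (fun n => by positivity) (fun n => by positivity)
  have a5 := a1.mul_of_nonneg a4 (fun n => by positivity)
    (fun n => by simp only [Pi.zero_apply]; positivity)
  refine Summable.of_nonneg_of_le (fun q => by positivity) (fun q => ?_) a5
  obtain ⟨d, e, f⟩ := q
  by_cases h : gg (d, e, f) = 0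
  · rw [h]; simp only [abs_zero, zero_mul]; positivity
  · obtain ⟨hd, he, hf⟩ := gg_ne_zero h
    rw [kl_rpow s w d e f hd he hf]
    exact mul_le_of_le_one_left (by positivity) (gg_abs_le _)

lemma summable_kterm (s w : ℝ) (h1 : 1 < s + w) (h2 : 1 < 2 * s + w) (h3 : 1 < s + 2 * w) :
    Summable (kterm s w) := by
  apply Summable.of_norm
  refine (summable_kterm_abs s w h1 h2 h3).congr fun q => ?_
  unfold kterm
  rw [Real.norm_eq_abs, abs_mul, abs_of_nonneg (a := _ * _) (by positivity)]

lemma tsum_kterm_swap (s w : ℝ) : ∑' q, kterm w s q = ∑' q, kterm s w q := by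
  let σ : ℕ × ℕ × ℕ ≃ ℕ × ℕ × ℕ := (Equiv.refl ℕ).prodCongr (Equiv.prodComm ℕ ℕ)
  rw [← σ.tsum_eq]
  congr 1
  ext ⟨d, e, f⟩
  simp only [σ, Equiv.prodCongr_apply, Prod.map, Equiv.refl_apply, Equiv.prodComm_apply,
    Prod.swap, kterm, gg, GG, kk, ll]
  have e1 : d * f * e = d * e * f := by ring
  have e2 : d * f ^ 2 * e = d * e * f ^ 2 := by ring
  have e3 : d * f * e ^ 2 = d * e ^ 2 * f := by ring
  rw [e1, e2, e3]
  push_cast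
  ring


/-- the function `μ(n) n^{-s}` -/
noncomputable def muRpow (s : ℝ) : ArithmeticFunction ℝ :=
  ⟨fun n => (ArithmeticFunction.moebius n : ℝ) * (n : ℝ) ^ (-s), by simp⟩

/-- the function `μ(n)² n^{-s}` -/
noncomputable def muSqRpow (s : ℝ) : ArithmeticFunction ℝ :=
  ⟨fun n => (ArithmeticFunction.moebius n : ℝ) ^ 2 * (n : ℝ) ^ (-s), by simp⟩

lemma muRpow_mult (s : ℝ) : (muRpow s).IsMultiplicative := by
  refine ⟨by simp [muRpow], ?_⟩
  intro m n h
  simp only [muRpow, ArithmeticFunction.coe_mk]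
  rw [ArithmeticFunction.isMultiplicative_moebius.map_mul_of_coprime h]
  push_cast
  rw [Real.mul_rpow (by positivity) (by positivity)]
  ring

lemma muSqRpow_mult (s : ℝ) : (muSqRpow s).IsMultiplicative := by
  refine ⟨by simp [muSqRpow], ?_⟩
  intro m n h
  simp only [muSqRpow, ArithmeticFunction.coe_mk]
  rw [ArithmeticFunction.isMultiplicative_moebius.map_mul_of_coprime h]
  push_cast
  rw [Real.mul_rpow (by positivity) (by positivity)]
  ring

/-- collapsed coefficients -/
noncomputable def cf (s w : ℝ) : ArithmeticFunction ℝ :=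
  (muSqRpow (s + w)).pmul
    (((ArithmeticFunction.zeta : ArithmeticFunction ℕ) : ArithmeticFunction ℝ) *
      (muRpow s * muRpow w))

lemma cf_mult (s w : ℝ) : (cf s w).IsMultiplicative :=
  (muSqRpow_mult _).pmul
    ((ArithmeticFunction.isMultiplicative_zeta.natCast).mul
      ((muRpow_mult s).mul (muRpow_mult w)))

lemma kterm_eq (s w : ℝ) (d e f : ℕ) (hd : d ≠ 0) (he : e ≠ 0) (hf : f ≠ 0) :
    kterm s w (d, e, f) = muSqRpow (s + w) (d * e * f) * (muRpow s e * muRpow w f) := by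
  unfold kterm
  rw [kl_rpow s w d e f hd he hf]
  have hd' : (0 : ℝ) < d := by positivity
  have he' : (0 : ℝ) < e := by positivity
  have hf' : (0 : ℝ) < f := by positivity
  simp only [muSqRpow, muRpow, ArithmeticFunction.coe_mk, gg, GG]
  push_cast
  rw [Real.mul_rpow (by positivity) (by positivity), Real.mul_rpow (by positivity) (by positivity)]
  have h2 : (e : ℝ) ^ (-(2 * s + w)) = (e : ℝ) ^ (-(s + w)) * (e : ℝ) ^ (-s) := by
    rw [← Real.rpow_add he']; ring_nf
  have h3 : (f : ℝ) ^ (-(s + 2 * w)) = (f : ℝ) ^ (-(s + w)) * (f : ℝ) ^ (-w) := by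
    rw [← Real.rpow_add hf']; ring_nf
  rw [h2, h3]
  ring

lemma fiber_kterm (s w : ℝ) (r : ℕ) :
    ∑' b : ((fun q : ℕ × ℕ × ℕ => q.1 * q.2.1 * q.2.2) ⁻¹' {r} : Set (ℕ × ℕ × ℕ)),
      kterm s w b = cf s w r := by
  classical
  rcases eq_or_ne r 0 with rfl | hr
  · rw [ArithmeticFunction.map_zero]
    convert tsum_zero with b
    obtain ⟨b, hb⟩ := b
    simp only [Set.mem_preimage, Set.mem_singleton_iff] at hb
    unfold kterm
    by_cases h : gg b = 0
    · rw [h, zero_mul]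
    · obtain ⟨h1, h2, h3⟩ := gg_ne_zero h
      exact absurd hb (by positivity)
  · set S : Finset (ℕ × ℕ × ℕ) := (r.divisors ×ˢ r.divisors ×ˢ r.divisors).filter
      (fun q => q.1 * q.2.1 * q.2.2 = r) with hS
    have hset : ((fun q : ℕ × ℕ × ℕ => q.1 * q.2.1 * q.2.2) ⁻¹' {r} : Set (ℕ × ℕ × ℕ)) = ↑S := by
      ext ⟨d, e, f⟩
      simp only [Set.mem_preimage, Set.mem_singleton_iff, hS, Finset.coe_filter,
        Finset.mem_product, Nat.mem_divisors, Set.mem_ofPred_eq]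
      constructor
      · intro h
        refine ⟨⟨⟨⟨e * f, by rw [← h]; ring⟩, hr⟩, ⟨⟨d * f, by rw [← h]; ring⟩, hr⟩,
          ⟨⟨d * e, by rw [← h]; ring⟩, hr⟩⟩, h⟩
      · exact fun h => h.2
    rw [hset, Finset.tsum_subtype' S (kterm s w)]
    unfold cf
    rw [ArithmeticFunction.pmul_apply, ArithmeticFunction.mul_apply, Finset.mul_sum]
    simp_rw [ArithmeticFunction.mul_apply, Finset.mul_sum]
    rw [Finset.sum_sigma']
    refine Finset.sum_bij' (fun q _ => ⟨(q.1, q.2.1 * q.2.2), (q.2.1, q.2.2)⟩)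
      (fun x _ => (x.1.1, x.2.1, x.2.2)) ?_ ?_ ?_ ?_ ?_
    · rintro ⟨d, e, f⟩ hq
      simp only [hS, Finset.mem_filter] at hq
      have h0 : d * e * f ≠ 0 := by rw [hq.2]; exact hr
      have h0' : e * f ≠ 0 := by
        intro h; apply h0; rw [mul_assoc, h, mul_zero]
      simp only [Finset.mem_sigma, Nat.mem_divisorsAntidiagonal]
      exact ⟨⟨by rw [← hq.2]; ring, hr⟩, trivial, h0'⟩
    · rintro ⟨⟨d, m⟩, ⟨e, f⟩⟩ hx
      simp only [Finset.mem_sigma, Nat.mem_divisorsAntidiagonal] at hx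
      obtain ⟨⟨h1, _⟩, h2, _⟩ := hx
      have h : d * e * f = r := by rw [← h1, ← h2]; ring
      simp only [hS, Finset.mem_filter, Finset.mem_product, Nat.mem_divisors]
      refine ⟨⟨⟨⟨e * f, by rw [← h]; ring⟩, hr⟩, ⟨⟨d * f, by rw [← h]; ring⟩, hr⟩,
          ⟨⟨d * e, by rw [← h]; ring⟩, hr⟩⟩, h⟩
    · rintro ⟨d, e, f⟩ hq
      rfl
    · rintro ⟨⟨d, m⟩, ⟨e, f⟩⟩ hx
      simp only [Finset.mem_sigma, Nat.mem_divisorsAntidiagonal] at hx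
      obtain ⟨⟨h1, _⟩, h2, _⟩ := hx
      subst h2
      rfl
    · rintro ⟨d, e, f⟩ hq
      simp only [hS, Finset.mem_filter] at hq
      have h0 : d * e * f ≠ 0 := by rw [hq.2]; exact hr
      have hd : d ≠ 0 := by rintro rfl; simp at h0
      have he : e ≠ 0 := by rintro rfl; simp at h0
      have hf : f ≠ 0 := by rintro rfl; simp at h0
      rw [kterm_eq s w d e f hd he hf, hq.2]
      simp only [ArithmeticFunction.natCoe_apply, ArithmeticFunction.zeta_apply_ne hd]
      push_cast
      ring

lemma cf_prime (s w : ℝ) {p : ℕ} (hp : p.Prime) :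
    cf s w p = (p : ℝ) ^ (-(s + w)) * (1 - (p : ℝ) ^ (-s) - (p : ℝ) ^ (-w)) := by
  unfold cf
  rw [ArithmeticFunction.pmul_apply, ArithmeticFunction.coe_zeta_mul_apply, hp.sum_divisors,
    ((muRpow_mult s).mul (muRpow_mult w)).map_one, ArithmeticFunction.mul_apply,
    Nat.sum_divisorsAntidiagonal (fun a b => muRpow s a * muRpow w b), hp.sum_divisors,
    Nat.div_self hp.pos, Nat.div_one, (muRpow_mult s).map_one, (muRpow_mult w).map_one]
  simp only [muSqRpow, muRpow, ArithmeticFunction.coe_mk,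
    ArithmeticFunction.moebius_apply_prime hp]
  push_cast
  ring

lemma cf_prime_pow (s w : ℝ) {p e : ℕ} (hp : p.Prime) (he : 2 ≤ e) : cf s w (p ^ e) = 0 := by
  unfold cf
  rw [ArithmeticFunction.pmul_apply]
  have : ArithmeticFunction.moebius (p ^ e) = 0 := by
    rw [ArithmeticFunction.moebius_apply_prime_pow hp (by omega), if_neg (by omega)]
  simp [muSqRpow, this]

lemma euler_kterm (s w : ℝ) (h1 : 1 < s + w) (h2 : 1 < 2 * s + w) (h3 : 1 < s + 2 * w) :
    HasProd (fun p : Nat.Primes => 1 + ((p : ℕ) : ℝ) ^ (-(s + w)) *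
      (1 - ((p : ℕ) : ℝ) ^ (-s) - ((p : ℕ) : ℝ) ^ (-w))) (∑' q, kterm s w q) := by
  have hs := (summable_kterm s w h1 h2 h3).hasSum.tsum_fiberwise
    (fun q : ℕ × ℕ × ℕ => q.1 * q.2.1 * q.2.2)
  simp_rw [fiber_kterm] at hs
  have hp := EulerProduct.eulerProduct_hasProd (f := fun n => cf s w n) (cf_mult s w).map_one
    (fun {m n} h => (cf_mult s w).map_mul_of_coprime h) hs.summable.norm
    (cf s w).map_zero
  rw [hs.tsum_eq] at hp
  have e : (fun p : Nat.Primes => 1 + ((p : ℕ) : ℝ) ^ (-(s + w)) *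
      (1 - ((p : ℕ) : ℝ) ^ (-s) - ((p : ℕ) : ℝ) ^ (-w)))
      = fun p : Nat.Primes => ∑' e : ℕ, cf s w ((p : ℕ) ^ e) := by
    funext p
    rw [tsum_eq_sum (s := Finset.range 2)]
    · rw [Finset.sum_range_succ, Finset.sum_range_one, pow_zero, pow_one, (cf_mult s w).map_one,
        cf_prime s w p.2]
    · intro e he
      exact cf_prime_pow s w p.2 (by rw [Finset.mem_range] at he; omega)
  rw [e]
  exact hp


lemma half_formula (n : ℕ) : (((n / 2 + 1 : ℕ)) : ℝ) = (2 * n + 3 + (-1) ^ n) / 4 := by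
  rcases Nat.even_or_odd' n with ⟨k, rfl | rfl⟩
  · rw [Nat.mul_div_cancel_left k (by norm_num), pow_mul]
    push_cast
    norm_num
    ring
  · have : (2 * k + 1) / 2 = k := by omega
    rw [this, pow_succ, pow_mul]
    push_cast
    norm_num
    ring

lemma local_sum {u v : ℝ} (hu0 : 0 ≤ u) (hu : u < 1) (hv0 : 0 ≤ v) (hv : v < 1) :
    HasSum (fun q : ℕ × ℕ => (((q.1 + q.2) / 2 + 1 : ℕ) : ℝ) * (u ^ q.1 * v ^ q.2))
      ((1 + u * v - u ^ 2 * v - u * v ^ 2) / ((1 - u) * (1 - u ^ 2) * (1 - v) * (1 - v ^ 2))) := by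
  have key : ∀ {f g : ℕ → ℝ} {a b : ℝ}, HasSum f a → HasSum g b →
      HasSum (fun q : ℕ × ℕ => f q.1 * g q.2) (a * b) := fun hf hg =>
    hf.mul hg (summable_mul_of_summable_norm hf.summable.norm hg.summable.norm)
  have nu : ‖u‖ < 1 := by rwa [Real.norm_eq_abs, abs_of_nonneg hu0]
  have nv : ‖v‖ < 1 := by rwa [Real.norm_eq_abs, abs_of_nonneg hv0]
  have gu := hasSum_geometric_of_norm_lt_one nu
  have gv := hasSum_geometric_of_norm_lt_one nv
  have gu' := hasSum_geometric_of_norm_lt_one (ξ := -u) (by rwa [norm_neg])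
  have gv' := hasSum_geometric_of_norm_lt_one (ξ := -v) (by rwa [norm_neg])
  have cu := hasSum_coe_mul_geometric_of_norm_lt_one nu
  have cv := hasSum_coe_mul_geometric_of_norm_lt_one nv
  have h := ((((key cu gv).mul_left (1 / 2)).add ((key gu cv).mul_left (1 / 2))).add
    ((key gu gv).mul_left (3 / 4))).add ((key gu' gv').mul_left (1 / 4))
  have h1 : 1 - u ≠ 0 := by linarith
  have h2 : 1 - v ≠ 0 := by linarith
  have h3 : 1 + u ≠ 0 := by linarith
  have h4 : 1 + v ≠ 0 := by linarith
  have ef : (fun q : ℕ × ℕ => (((q.1 + q.2) / 2 + 1 : ℕ) : ℝ) * (u ^ q.1 * v ^ q.2))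
      = fun b : ℕ × ℕ => 1 / 2 * (b.1 * u ^ b.1 * v ^ b.2) + 1 / 2 * (u ^ b.1 * (b.2 * v ^ b.2))
        + 3 / 4 * (u ^ b.1 * v ^ b.2) + 1 / 4 * ((-u) ^ b.1 * (-v) ^ b.2) := by
    funext q
    rw [half_formula, neg_pow u, neg_pow v, pow_add]
    push_cast
    ring
  have ev : (1 + u * v - u ^ 2 * v - u * v ^ 2) / ((1 - u) * (1 - u ^ 2) * (1 - v) * (1 - v ^ 2))
      = 1 / 2 * (u / (1 - u) ^ 2 * (1 - v)⁻¹) + 1 / 2 * ((1 - u)⁻¹ * (v / (1 - v) ^ 2))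
        + 3 / 4 * ((1 - u)⁻¹ * (1 - v)⁻¹) + 1 / 4 * ((1 - -u)⁻¹ * (1 - -v)⁻¹) := by
    have e1 : 1 - u ^ 2 = (1 - u) * (1 + u) := by ring
    have e2 : 1 - v ^ 2 = (1 - v) * (1 + v) := by ring
    rw [e1, e2, sub_neg_eq_add, sub_neg_eq_add]
    field_simp
    ring
  rw [ef, ev]
  exact h

lemma zeta_two_real : HasProd (fun p : Nat.Primes => ((1 - (((p : ℕ) : ℝ)⁻¹) ^ 2)⁻¹ : ℂ))
    ((Real.pi ^ 2 / 6 : ℝ) : ℂ) := by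
  have h := riemannZeta_eulerProduct_hasProd (s := 2) (by norm_num)
  rw [riemannZeta_two] at h
  convert h using 1
  · funext p
    rw [Complex.cpow_neg, Complex.cpow_ofNat]
    push_cast
    rw [inv_pow]
  · push_cast; rfl

lemma prime_inv_lt (p : Nat.Primes) : 0 < (((p : ℕ) : ℝ)⁻¹) ∧ (((p : ℕ) : ℝ)⁻¹) < 1 := by
  have : (1 : ℝ) < ((p : ℕ) : ℝ) := by exact_mod_cast p.2.one_lt
  exact ⟨by positivity, inv_lt_one_of_one_lt₀ this⟩

lemma euler_complex (s w : ℝ) (h1 : 1 < s + w) (h2 : 1 < 2 * s + w) (h3 : 1 < s + 2 * w) :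
    HasProd (fun p : Nat.Primes => ((1 + ((p : ℕ) : ℝ) ^ (-(s + w)) *
      (1 - ((p : ℕ) : ℝ) ^ (-s) - ((p : ℕ) : ℝ) ^ (-w)) : ℝ) : ℂ)) ((∑' q, kterm s w q : ℝ) : ℂ) :=
  (euler_kterm s w h1 h2 h3).map Complex.ofRealHom Complex.continuous_ofReal

lemma C1_eq : (∏' p : Nat.Primes,
                ((1 - ((p : ℕ) : ℂ)⁻¹) ^ 2 *
                  ∑' q : ℕ × ℕ,
                    (tau12 ((p : ℕ) ^ (q.1 + q.2)) : ℂ) / ((p : ℕ) : ℂ) ^ (q.1 + q.2)))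
    = (((Real.pi ^ 2 / 6) ^ 2 * ∑' q, kterm 1 1 q : ℝ) : ℂ) := by
  have h := (zeta_two_real.mul zeta_two_real).mul
    (euler_complex 1 1 (by norm_num) (by norm_num) (by norm_num))
  have e : ((Real.pi ^ 2 / 6 : ℝ) : ℂ) * ((Real.pi ^ 2 / 6 : ℝ) : ℂ) *
      ((∑' q, kterm 1 1 q : ℝ) : ℂ) = (((Real.pi ^ 2 / 6) ^ 2 * ∑' q, kterm 1 1 q : ℝ) : ℂ) := by
    push_cast; ring
  rw [e] at h
  rw [← h.tprod_eq]
  congr 1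
  funext p
  obtain ⟨u0, u1⟩ := prime_inv_lt p
  have hp0 : (0 : ℝ) < ((p : ℕ) : ℝ) := inv_pos.1 u0
  have hs := local_sum u0.le u1 u0.le u1
  have hs2 : ∑' q : ℕ × ℕ, (tau12 ((p : ℕ) ^ (q.1 + q.2)) : ℂ) / ((p : ℕ) : ℂ) ^ (q.1 + q.2)
      = ((∑' q : ℕ × ℕ, (((q.1 + q.2) / 2 + 1 : ℕ) : ℝ) *
        ((((p : ℕ) : ℝ)⁻¹) ^ q.1 * (((p : ℕ) : ℝ)⁻¹) ^ q.2) : ℝ) : ℂ) := by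
    rw [Complex.ofReal_tsum]
    refine tsum_congr fun q => ?_
    rw [tau12_prime_pow p.2, ← pow_add, div_eq_mul_inv]
    push_cast
    rw [inv_pow]
  rw [hs2, hs.tsum_eq]
  have e1 : ((p : ℕ) : ℝ) ^ (-(1 : ℝ)) = (((p : ℕ) : ℝ)⁻¹) := Real.rpow_neg_one _
  have e2 : ((p : ℕ) : ℝ) ^ (-((1 : ℝ) + 1)) = (((p : ℕ) : ℝ)⁻¹) * (((p : ℕ) : ℝ)⁻¹) := by
    rw [neg_add, Real.rpow_add hp0, e1]
  rw [e1, e2]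
  have ec : (((p : ℕ) : ℂ)⁻¹) = (((((p : ℕ) : ℝ)⁻¹) : ℝ) : ℂ) := by push_cast; rfl
  rw [ec]
  generalize (((p : ℕ) : ℝ)⁻¹) = u at *
  norm_cast
  have h1 : 1 - u ≠ 0 := by linarith
  have h2 : 1 - u ^ 2 ≠ 0 := by nlinarith
  field_simp
  ring

lemma C2_eq : (∏' p : Nat.Primes,
                ((1 - ((p : ℕ) : ℂ)⁻¹) ^ 2 * (1 - ((p : ℕ) : ℂ) ^ (-(1 : ℂ) / 2)) *
                  ∑' q : ℕ × ℕ,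
                    (tau12 ((p : ℕ) ^ (q.1 + q.2)) : ℂ) *
                      ((p : ℕ) : ℂ) ^ (-(q.1 : ℂ) - (q.2 : ℂ) / 2)))
    = (((Real.pi ^ 2 / 6) * ∑' q, kterm 1 (1 / 2) q : ℝ) : ℂ) := by
  have h := zeta_two_real.mul
    (euler_complex 1 (1 / 2) (by norm_num) (by norm_num) (by norm_num))
  rw [← Complex.ofReal_mul] at h
  rw [← h.tprod_eq]
  congr 1
  funext p
  obtain ⟨u0, u1⟩ := prime_inv_lt p
  have hp0 : (0 : ℝ) < ((p : ℕ) : ℝ) := inv_pos.1 u0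
  have hp1 : (1 : ℝ) < ((p : ℕ) : ℝ) := by exact_mod_cast p.2.one_lt
  have v0 : 0 < ((p : ℕ) : ℝ) ^ (-(1 / 2 : ℝ)) := by positivity
  have v1 : ((p : ℕ) : ℝ) ^ (-(1 / 2 : ℝ)) < 1 :=
    Real.rpow_lt_one_of_one_lt_of_neg hp1 (by norm_num)
  have hs := local_sum u0.le u1 v0.le v1
  have hs2 : ∑' q : ℕ × ℕ, (tau12 ((p : ℕ) ^ (q.1 + q.2)) : ℂ) *
        ((p : ℕ) : ℂ) ^ (-(q.1 : ℂ) - (q.2 : ℂ) / 2)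
      = ((∑' q : ℕ × ℕ, (((q.1 + q.2) / 2 + 1 : ℕ) : ℝ) *
        ((((p : ℕ) : ℝ)⁻¹) ^ q.1 * (((p : ℕ) : ℝ) ^ (-(1 / 2 : ℝ))) ^ q.2) : ℝ) : ℂ) := by
    rw [Complex.ofReal_tsum]
    refine tsum_congr fun q => ?_
    rw [tau12_prime_pow p.2, Complex.ofReal_mul, Complex.ofReal_natCast]
    congr 1
    have er : (((p : ℕ) : ℝ)⁻¹) ^ q.1 * (((p : ℕ) : ℝ) ^ (-(1 / 2 : ℝ))) ^ q.2
        = ((p : ℕ) : ℝ) ^ (-(q.1 : ℝ) - (q.2 : ℝ) / 2) := by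
      rw [← Real.rpow_neg_one, ← Real.rpow_mul_natCast hp0.le, ← Real.rpow_mul_natCast hp0.le,
        ← Real.rpow_add hp0]
      congr 1
      ring
    rw [er, Complex.ofReal_cpow hp0.le]
    push_cast
    rfl
  have ev : ((p : ℕ) : ℂ) ^ (-(1 : ℂ) / 2) = ((((p : ℕ) : ℝ) ^ (-(1 / 2 : ℝ)) : ℝ) : ℂ) := by
    rw [Complex.ofReal_cpow hp0.le]
    push_cast
    congr 1
    ring
  rw [hs2, hs.tsum_eq, ev]
  have e1 : ((p : ℕ) : ℝ) ^ (-(1 : ℝ)) = (((p : ℕ) : ℝ)⁻¹) := Real.rpow_neg_one _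
  have e2 : ((p : ℕ) : ℝ) ^ (-((1 : ℝ) + 1 / 2)) = (((p : ℕ) : ℝ)⁻¹) *
      ((p : ℕ) : ℝ) ^ (-(1 / 2 : ℝ)) := by
    rw [neg_add, Real.rpow_add hp0, e1]
  have e3 : (((p : ℕ) : ℝ) ^ (-(1 / 2 : ℝ))) ^ 2 = (((p : ℕ) : ℝ)⁻¹) := by
    rw [← Real.rpow_mul_natCast hp0.le, ← Real.rpow_neg_one]
    norm_num
  rw [e1, e2]
  have ec : (((p : ℕ) : ℂ)⁻¹) = (((((p : ℕ) : ℝ)⁻¹) : ℝ) : ℂ) := by push_cast; rfl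
  rw [ec]
  generalize (((p : ℕ) : ℝ)⁻¹) = u at *
  generalize (((p : ℕ) : ℝ) ^ (-(1 / 2 : ℝ))) = v at *
  norm_cast
  have h1 : 1 - u ≠ 0 := by linarith
  have h2 : 1 - u ^ 2 ≠ 0 := by nlinarith
  have h3 : 1 - v ≠ 0 := by linarith
  rw [e3]
  field_simp
  rw [e3.symm]
  ring


lemma div_rpow_mul {x k l : ℝ} (hx : 0 < x) (hk : 0 < k) (hl : 0 < l) (s w : ℝ) :
    (x / k) ^ s * (x / l) ^ w = x ^ (s + w) * (k ^ (-s) * l ^ (-w)) := by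
  rw [Real.div_rpow hx.le hk.le, Real.div_rpow hx.le hl.le, Real.rpow_add hx, Real.rpow_neg hk.le,
    Real.rpow_neg hl.le]
  ring

lemma real_asymptotic : ∃ z D : ℝ, (z : ℂ) = riemannZeta (1 / 2) ∧ ∀ x : ℝ, 0 < x →
    |(∑ m ∈ Finset.Icc 1 ⌊x⌋₊, ∑ n ∈ Finset.Icc 1 ⌊x⌋₊, (tau12 (m * n) : ℝ))
      - (Real.pi ^ 2 / 6) ^ 2 * (∑' q, kterm 1 1 q) * x ^ 2
      - 2 * z * ((Real.pi ^ 2 / 6) * ∑' q, kterm 1 (1 / 2) q) * x ^ (3 / 2 : ℝ)|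
      ≤ D * x ^ (4 / 3 : ℝ) := by
  obtain ⟨z, C, hz, hC, h⟩ := exists_TT_bound
  set P := Real.pi ^ 2 / 6 with hP
  have hP0 : 0 ≤ P := by positivity
  set A : ℝ → ℝ → ℕ × ℕ × ℕ → ℝ := fun s w q =>
    |gg q| * ((kk q : ℝ) ^ (-s) * (ll q : ℝ) ^ (-w)) with hA
  have s1 : Summable (A 1 (1 / 3)) := summable_kterm_abs _ _ (by norm_num) (by norm_num) (by norm_num)
  have s2 : Summable (A (1 / 3) 1) := summable_kterm_abs _ _ (by norm_num) (by norm_num) (by norm_num)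
  have s3 : Summable (A (2 / 3) (2 / 3)) :=
    summable_kterm_abs _ _ (by norm_num) (by norm_num) (by norm_num)
  refine ⟨z, P * C * (∑' q, A 1 (1 / 3) q) + P * C * (∑' q, A (1 / 3) 1 q)
    + C ^ 2 * ∑' q, A (2 / 3) (2 / 3) q, hz, fun x hx => ?_⟩
  have hB := (((s1.hasSum.mul_left (P * C)).add (s2.hasSum.mul_left (P * C))).add
    (s3.hasSum.mul_left (C ^ 2))).mul_right (x ^ (4 / 3 : ℝ))
  have k1 := (summable_kterm 1 1 (by norm_num) (by norm_num) (by norm_num)).hasSum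
  have k2 := (summable_kterm 1 (1 / 2) (by norm_num) (by norm_num) (by norm_num)).hasSum
  have k3 := (summable_kterm (1 / 2) 1 (by norm_num) (by norm_num) (by norm_num)).hasSum
  rw [tsum_kterm_swap 1 (1 / 2)] at k3
  have hF := (((sum_tau12_eq_tsum x).sub (k1.mul_left (P ^ 2 * x ^ 2))).sub
    (k2.mul_left (P * z * x ^ (3 / 2 : ℝ)))).sub (k3.mul_left (P * z * x ^ (3 / 2 : ℝ)))
  have key := tsum_of_norm_bounded (f := fun q => gg q * TT (x / kk q) * TT (x / ll q)
      - P ^ 2 * x ^ 2 * kterm 1 1 q - P * z * x ^ (3 / 2 : ℝ) * kterm 1 (1 / 2) q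
      - P * z * x ^ (3 / 2 : ℝ) * kterm (1 / 2) 1 q) hB ?_
  · rw [hF.tsum_eq, Real.norm_eq_abs] at key
    refine le_trans (le_of_eq ?_) key
    congr 1
    ring
  · intro q
    simp only [hA, kterm]
    by_cases h0 : gg q = 0
    · rw [h0]; simp
    · obtain ⟨hd, he, hf⟩ := gg_ne_zero h0
      have hk : (0 : ℝ) < kk q := by
        have : 0 < kk q := by unfold kk; positivity
        exact_mod_cast this
      have hl : (0 : ℝ) < ll q := by
        have : 0 < ll q := by unfold ll; positivity
        exact_mod_cast this
      have hp := TT_product hP0 hC (div_pos hx hk) (div_pos hx hl) h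
      have r := div_rpow_mul hx hk hl
      have r1 := r 1 1
      have r2 := r 1 (1 / 2)
      have r3 := r (1 / 2) 1
      have r4 := r 1 (1 / 3)
      have r5 := r (1 / 3) 1
      have r6 := r (2 / 3) (2 / 3)
      rw [Real.rpow_one, Real.rpow_one, show (1 : ℝ) + 1 = (2 : ℕ) by norm_num,
        Real.rpow_natCast] at r1
      rw [Real.rpow_one, show (1 : ℝ) + 1 / 2 = 3 / 2 by norm_num] at r2
      rw [Real.rpow_one, show (1 / 2 : ℝ) + 1 = 3 / 2 by norm_num] at r3
      rw [Real.rpow_one, show (1 : ℝ) + 1 / 3 = 4 / 3 by norm_num] at r4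
      rw [Real.rpow_one, show (1 / 3 : ℝ) + 1 = 4 / 3 by norm_num] at r5
      rw [show (2 / 3 : ℝ) + 2 / 3 = 4 / 3 by norm_num] at r6
      rw [r1, r2, r3, r4, r5, r6] at hp
      have hm := mul_le_mul_of_nonneg_left hp (abs_nonneg (gg q))
      rw [← abs_mul] at hm
      rw [Real.norm_eq_abs]
      generalize (kk q : ℝ) ^ (-(1 : ℝ)) = a1 at hm ⊢
      generalize (ll q : ℝ) ^ (-(1 : ℝ)) = b1 at hm ⊢
      generalize (kk q : ℝ) ^ (-(1 / 2 : ℝ)) = a2 at hm ⊢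
      generalize (ll q : ℝ) ^ (-(1 / 2 : ℝ)) = b2 at hm ⊢
      generalize (kk q : ℝ) ^ (-(1 / 3 : ℝ)) = a3 at hm ⊢
      generalize (ll q : ℝ) ^ (-(1 / 3 : ℝ)) = b3 at hm ⊢
      generalize (kk q : ℝ) ^ (-(2 / 3 : ℝ)) = a4 at hm ⊢
      generalize (ll q : ℝ) ^ (-(2 / 3 : ℝ)) = b4 at hm ⊢
      generalize x ^ (3 / 2 : ℝ) = x1 at hm ⊢
      generalize x ^ (4 / 3 : ℝ) = x2 at hm ⊢
      refine le_trans (le_of_eq ?_) (hm.trans (le_of_eq ?_))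
      · apply congrArg
        ring
      · ring


/-- Main theorem: `∑_{m,n ≤ x} τ_{1,2}(mn) = C₁ x² + C₂ x^{3/2} + O(x^{10/7+ε})`, where
`C₁ = ∏_p (1-p⁻¹)² ∑_{a,b≥0} τ_{1,2}(p^{a+b}) p^{-(a+b)}` and
`C₂ = 2 ζ(1/2) ∏_p (1-p⁻¹)²(1-p^{-1/2}) ∑_{a,b≥0} τ_{1,2}(p^{a+b}) p^{-a-b/2}`. -/
theorem sum_tau12_mul_asymptotic :
    ∀ ε > (0 : ℝ),
      (fun x : ℝ =>
          (∑ m ∈ Finset.Icc 1 ⌊x⌋₊, ∑ n ∈ Finset.Icc 1 ⌊x⌋₊, (tau12 (m * n) : ℂ)) -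
            (∏' p : Nat.Primes,
                ((1 - ((p : ℕ) : ℂ)⁻¹) ^ 2 *
                  ∑' q : ℕ × ℕ,
                    (tau12 ((p : ℕ) ^ (q.1 + q.2)) : ℂ) / ((p : ℕ) : ℂ) ^ (q.1 + q.2))) *
              (x : ℂ) ^ 2 -
            2 * riemannZeta (1 / 2) *
              (∏' p : Nat.Primes,
                ((1 - ((p : ℕ) : ℂ)⁻¹) ^ 2 * (1 - ((p : ℕ) : ℂ) ^ (-(1 : ℂ) / 2)) *
                  ∑' q : ℕ × ℕ,
                    (tau12 ((p : ℕ) ^ (q.1 + q.2)) : ℂ) *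
                      ((p : ℕ) : ℂ) ^ (-(q.1 : ℂ) - (q.2 : ℂ) / 2))) *
              ((x ^ ((3 : ℝ) / 2) : ℝ) : ℂ)) =O[atTop]
        fun x : ℝ => x ^ (10 / 7 + ε) := by
  intro ε hε
  obtain ⟨z, D, hz, h⟩ := real_asymptotic
  rw [C1_eq, C2_eq, ← hz]
  refine IsBigO.of_bound |D| ?_
  filter_upwards [eventually_ge_atTop (1 : ℝ)] with x hx
  have hx0 : 0 < x := by linarith
  have hb := h x hx0
  have e : (∑ m ∈ Finset.Icc 1 ⌊x⌋₊, ∑ n ∈ Finset.Icc 1 ⌊x⌋₊, (tau12 (m * n) : ℂ)) -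
      (((Real.pi ^ 2 / 6) ^ 2 * ∑' q, kterm 1 1 q : ℝ) : ℂ) * (x : ℂ) ^ 2 -
      2 * (z : ℂ) * (((Real.pi ^ 2 / 6) * ∑' q, kterm 1 (1 / 2) q : ℝ) : ℂ) *
        ((x ^ ((3 : ℝ) / 2) : ℝ) : ℂ)
      = (((∑ m ∈ Finset.Icc 1 ⌊x⌋₊, ∑ n ∈ Finset.Icc 1 ⌊x⌋₊, (tau12 (m * n) : ℝ))
      - (Real.pi ^ 2 / 6) ^ 2 * (∑' q, kterm 1 1 q) * x ^ 2
      - 2 * z * ((Real.pi ^ 2 / 6) * ∑' q, kterm 1 (1 / 2) q) * x ^ (3 / 2 : ℝ) : ℝ) : ℂ) := by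
    push_cast
    rfl
  rw [e, Complex.norm_real, Real.norm_eq_abs, Real.norm_eq_abs,
    abs_of_nonneg (show 0 ≤ x ^ (10 / 7 + ε) by positivity)]
  calc _ ≤ D * x ^ (4 / 3 : ℝ) := hb
    _ ≤ |D| * x ^ (4 / 3 : ℝ) := mul_le_mul_of_nonneg_right (le_abs_self D) (by positivity)
    _ ≤ |D| * x ^ (10 / 7 + ε) := by
      refine mul_le_mul_of_nonneg_left ?_ (abs_nonneg D)
      exact Real.rpow_le_rpow_of_exponent_le hx (by linarith)
end

section
/- Let τ^{(e)} be the multiplicative arithmetic function determined by τ^{(e)}(p^a) = τ(a) for every prime p and a ≥ 1, and τ^{(e)}(1) = 1. Then there exist real constants C₁ and C₂ such that for all real x ≥ 2, Σ_{m ≤ x} Σ_{n ≤ x} τ^{(e)}(m·n) = C₁·x² + C₂·x^{3/2} + O(x^{10/7+ε}) for every ε > 0. -/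
open Filter Asymptotics

namespace ExpDiv
open Finset ArithmeticFunction
open scoped ArithmeticFunction.zeta

lemma sum_antidiag_coprime (F : ℕ → ℕ → ℝ) {m n : ℕ} (cop : m.Coprime n) :
    ∑ x ∈ (m * n).divisorsAntidiagonal, F x.1 x.2 =
      ∑ x ∈ m.divisorsAntidiagonal, ∑ y ∈ n.divisorsAntidiagonal,
        F (x.1 * y.1) (x.2 * y.2) := by
  rw [← sum_product']
  symm
  apply sum_nbij fun ((i, j), k, l) ↦ (i * k, j * l)
  · rintro ⟨⟨a1, a2⟩, ⟨b1, b2⟩⟩ h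
    simp only [Nat.mem_divisorsAntidiagonal, Ne, mem_product] at h
    rcases h with ⟨⟨rfl, ha⟩, ⟨rfl, hb⟩⟩
    simp only [Nat.mem_divisorsAntidiagonal, mul_eq_zero, Ne]
    constructor
    · ring
    rw [mul_eq_zero] at *
    exact not_or_intro ha hb
  · simp only [Set.InjOn, mem_coe, Nat.mem_divisorsAntidiagonal, mem_product, Prod.mk_inj]
    rintro ⟨⟨a1, a2⟩, ⟨b1, b2⟩⟩ ⟨⟨rfl, ha⟩, ⟨rfl, hb⟩⟩ ⟨⟨c1, c2⟩, ⟨d1, d2⟩⟩ hcd h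
    dsimp only at *
    have key : ∀ {a1 a2 b1 b2 c1 c2 d1 d2 : ℕ}, Nat.Coprime (a1 * a2) (b1 * b2) →
        c1 * c2 = a1 * a2 → d1 * d2 = b1 * b2 → a1 * b1 = c1 * d1 → a1 ∣ c1 := by
      intro a1 a2 b1 b2 c1 c2 d1 d2 cop h1 h2 h3
      have : Nat.Coprime a1 d1 := by
        apply Nat.Coprime.coprime_dvd_left (Dvd.intro _ rfl : a1 ∣ a1 * a2)
        apply Nat.Coprime.coprime_dvd_right (Dvd.intro _ h2 : d1 ∣ b1 * b2) cop
      exact this.dvd_of_dvd_mul_right (h3 ▸ Dvd.intro _ rfl)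
    have cop' : Nat.Coprime (c1 * c2) (d1 * d2) := by rw [hcd.1.1, hcd.2.1]; exact cop
    have e1 : a1 = c1 := Nat.dvd_antisymm (key cop hcd.1.1 hcd.2.1 h.1)
      (key cop' hcd.1.1.symm hcd.2.1.symm h.1.symm)
    have e3 : b1 = d1 := Nat.dvd_antisymm
      (key cop.symm hcd.2.1 hcd.1.1 (by rw [mul_comm, h.1, mul_comm]))
      (key cop'.symm hcd.2.1.symm hcd.1.1.symm (by rw [mul_comm, ← h.1, mul_comm]))
    have ha1 : 0 < a1 := Nat.pos_of_ne_zero (by rintro rfl; simp at ha)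
    have hb1 : 0 < b1 := Nat.pos_of_ne_zero (by rintro rfl; simp at hb)
    subst e1 e3
    have e2 := Nat.eq_of_mul_eq_mul_left ha1 hcd.1.1
    have e4 := Nat.eq_of_mul_eq_mul_left hb1 hcd.2.1
    simp [e2, e4]
  · simp only [Set.SurjOn, Set.subset_def, mem_coe, Nat.mem_divisorsAntidiagonal, mem_product,
      Set.mem_image]
    rintro ⟨b1, b2⟩ h
    use ((b1.gcd m, b2.gcd m), (b1.gcd n, b2.gcd n))
    rw [← cop.gcd_mul _, ← cop.gcd_mul _, ← h.1, Nat.gcd_mul_gcd_of_coprime_of_mul_eq_mul cop h.1,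
      Nat.gcd_mul_gcd_of_coprime_of_mul_eq_mul cop.symm _]
    · rw [Ne, mul_eq_zero, not_or] at h
      simp [h.2.1, h.2.2]
    rw [mul_comm n m, h.1]
  · rintro ⟨⟨a1, a2⟩, ⟨b1, b2⟩⟩ h
    rfl

lemma sum_antidiag_prime_pow (F : ℕ → ℕ → ℝ) {p : ℕ} (hp : p.Prime) (k : ℕ) :
    ∑ x ∈ (p ^ k).divisorsAntidiagonal, F x.1 x.2 =
      ∑ i ∈ range (k + 1), F (p ^ i) (p ^ (k - i)) := by
  rw [Nat.sum_divisorsAntidiagonal, Nat.divisors_prime_pow hp, Finset.sum_map]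
  refine Finset.sum_congr rfl fun i hi => ?_
  simp only [Function.Embedding.coeFn_mk]
  rw [Nat.pow_div (by simp at hi; omega) hp.pos]

/-- The multiplicative function with prime power values `c k`. -/
noncomputable def mf (c : ℕ → ℝ) : ArithmeticFunction ℝ :=
  ⟨fun n => if n = 0 then 0 else n.factorization.prod fun _ k => c k, by simp⟩

lemma mf_apply (c : ℕ → ℝ) {n : ℕ} (hn : n ≠ 0) :
    mf c n = n.factorization.prod fun _ k => c k := by
  simp [mf, hn]

lemma mf_mult (c : ℕ → ℝ) : (mf c).IsMultiplicative := by
  rw [IsMultiplicative.iff_ne_zero]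
  refine ⟨by simp [mf], ?_⟩
  intro m n hm hn cop
  rw [mf_apply c hm, mf_apply c hn, mf_apply c (mul_ne_zero hm hn),
    Nat.factorization_mul hm hn]
  exact Finsupp.prod_add_index_of_disjoint cop.disjoint_primeFactors _

lemma mf_prime_pow (c : ℕ → ℝ) (hc : c 0 = 1) {p : ℕ} (hp : p.Prime) (k : ℕ) :
    mf c (p ^ k) = c k := by
  rw [mf_apply c (pow_ne_zero _ hp.ne_zero), hp.factorization_pow, Finsupp.prod_single_index hc]

/-- indicator of positive squares -/
noncomputable def sqi : ArithmeticFunction ℝ :=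
  ⟨fun n => if n ≠ 0 ∧ IsSquare n then 1 else 0, by simp⟩

lemma sqi_apply (n : ℕ) : sqi n = if n ≠ 0 ∧ IsSquare n then 1 else 0 := rfl

lemma isSquare_coprime {m n : ℕ} (cop : m.Coprime n) (h : IsSquare (m * n)) : IsSquare m := by
  obtain ⟨r, hr⟩ := h
  obtain ⟨d, hd⟩ := exists_eq_pow_of_mul_eq_pow (a := m) (b := n) (c := r) (k := 2)
    (by rw [Nat.isUnit_iff]; exact cop) (by rw [hr, sq])
  exact ⟨d, by rw [hd, sq]⟩

lemma sqi_mult : sqi.IsMultiplicative := by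
  rw [IsMultiplicative.iff_ne_zero]
  refine ⟨by simp [sqi_apply], ?_⟩
  intro m n hm hn cop
  have : IsSquare (m * n) ↔ IsSquare m ∧ IsSquare n :=
    ⟨fun h => ⟨isSquare_coprime cop h, isSquare_coprime cop.symm (mul_comm m n ▸ h)⟩,
      fun h => h.1.mul h.2⟩
  simp only [sqi_apply, this, hm, hn, mul_ne_zero hm hn, ne_eq, not_false_eq_true, true_and]
  by_cases h1 : IsSquare m <;> by_cases h2 : IsSquare n <;> simp [h1, h2]

lemma sqi_prime_pow {p : ℕ} (hp : p.Prime) (k : ℕ) :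
    sqi (p ^ k) = if Even k then 1 else 0 := by
  have : IsSquare (p ^ k) ↔ Even k := by
    constructor
    · rintro ⟨r, hr⟩
      have hr0 : r ≠ 0 := by rintro rfl; simp [hp.ne_zero] at hr
      have := congrArg (fun z => z.factorization p) hr
      simp [hp.factorization_pow, Nat.factorization_mul hr0 hr0] at this
      exact ⟨_, this⟩
    · rintro ⟨r, rfl⟩
      exact ⟨p ^ r, by rw [pow_add]⟩
  simp [sqi_apply, this, hp.ne_zero]

/-- coefficients of `(1-X)(1-X²)` -/
def nuc (k : ℕ) : ℝ := if k = 0 then 1 else if k = 1 then -1 else if k = 2 then -1 else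
  if k = 3 then 1 else 0

lemma abs_nuc_le (k : ℕ) : |nuc k| ≤ 1 := by
  unfold nuc; split_ifs <;> simp

noncomputable def nu : ArithmeticFunction ℝ := mf nuc

noncomputable def u : ArithmeticFunction ℝ := sqi * (ζ : ArithmeticFunction ℝ)

lemma nu_prime_pow {p : ℕ} (hp : p.Prime) (k : ℕ) : nu (p ^ k) = nuc k :=
  mf_prime_pow _ (by simp [nuc]) hp k

lemma u_mult : u.IsMultiplicative := sqi_mult.mul isMultiplicative_zeta.natCast

lemma u_prime_pow {p : ℕ} (hp : p.Prime) (k : ℕ) : u (p ^ k) = ((k / 2 + 1 : ℕ) : ℝ) := by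
  rw [u, ArithmeticFunction.mul_apply,
    sum_antidiag_prime_pow (fun a b => sqi a * (ζ : ArithmeticFunction ℝ) b) hp]
  have : ∀ i ∈ range (k + 1), sqi (p ^ i) * (ζ : ArithmeticFunction ℝ) (p ^ (k - i)) =
      if Even i then 1 else 0 := by
    intro i _
    rw [sqi_prime_pow hp]
    simp [natCoe_apply, zeta_apply, hp.ne_zero]
  rw [Finset.sum_congr rfl this]
  clear this
  induction k with
  | zero => rw [Finset.sum_range_succ]; simp
  | succ k ih =>
    rw [Finset.sum_range_succ, ih]
    rcases Nat.even_or_odd' k with ⟨r, rfl | rfl⟩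
    · have : ¬ Even (2 * r + 1) := by simp
      rw [if_neg this, add_zero]; congr 1; omega
    · have : Even (2 * r + 1 + 1) := ⟨r + 1, by ring⟩
      rw [if_pos this]; norm_cast; omega

lemma nu_mult : nu.IsMultiplicative := mf_mult _

lemma u_mul_nu : u * nu = 1 := by
  rw [(u_mult.mul nu_mult).eq_iff_eq_on_prime_powers _ _ isMultiplicative_one]
  intro p k hp
  rw [mul_comm, ArithmeticFunction.mul_apply, sum_antidiag_prime_pow (fun a b => nu a * u b) hp]
  have : ∀ i ∈ range (k + 1), nu (p ^ i) * u (p ^ (k - i)) =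
      nuc i * (((k - i) / 2 + 1 : ℕ) : ℝ) := by
    intro i _
    rw [nu_prime_pow hp, u_prime_pow hp]
  rw [Finset.sum_congr rfl this]
  match k with
  | 0 => simp [nuc]
  | 1 => simp [nuc, Finset.sum_range_succ, one_apply, hp.ne_one]
  | 2 => simp [nuc, Finset.sum_range_succ, one_apply, hp.ne_one]
  | k + 3 =>
    rw [one_apply, if_neg (by simp [hp.ne_one])]
    rw [show k + 3 + 1 = 4 + k by ring, Finset.sum_range_add]
    have : ∑ x ∈ range k, nuc (4 + x) * (((k + 3 - (4 + x)) / 2 + 1 : ℕ) : ℝ) = 0 := by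
      apply Finset.sum_eq_zero
      intro i _
      have : nuc (4 + i) = 0 := by
        unfold nuc; rw [if_neg, if_neg, if_neg, if_neg] <;> omega
      rw [this, zero_mul]
    rw [this]
    simp only [Finset.sum_range_succ, Finset.sum_range_zero, nuc]
    have e : (k + 3 - 0) / 2 + 1 + ((k + 3 - 3) / 2 + 1) =
      (k + 3 - 1) / 2 + 1 + ((k + 3 - 2) / 2 + 1) := by omega
    have e' : (((k + 3 - 0) / 2 + 1 : ℕ) : ℝ) + (((k + 3 - 3) / 2 + 1 : ℕ) : ℝ) =
      (((k + 3 - 1) / 2 + 1 : ℕ) : ℝ) + (((k + 3 - 2) / 2 + 1 : ℕ) : ℝ) := by exact_mod_cast e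
    norm_num at e' ⊢
    linarith

/-- Dirichlet convolution with `nu` of a bare function. -/
noncomputable def N (f : ℕ → ℝ) (n : ℕ) : ℝ := ∑ x ∈ n.divisorsAntidiagonal, nu x.1 * f x.2

lemma u_N (f : ℕ → ℝ) {n : ℕ} (hn : n ≠ 0) :
    ∑ x ∈ n.divisorsAntidiagonal, u x.1 * N f x.2 = f n := by
  let g : ArithmeticFunction ℝ := ⟨fun n => if n = 0 then 0 else f n, by simp⟩
  have hg : ∀ k, N f k = (nu * g) k := by
    intro k
    rw [N, ArithmeticFunction.mul_apply]
    refine Finset.sum_congr rfl fun x hx => ?_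
    have : x.2 ≠ 0 := by
      simp only [Nat.mem_divisorsAntidiagonal] at hx
      rintro h; simp [h] at hx; omega
    simp [g, this]
  simp only [hg]
  rw [← ArithmeticFunction.mul_apply, ← mul_assoc, u_mul_nu, one_mul]
  simp [g, hn]

noncomputable def h (t : ℕ → ℝ) (d e : ℕ) : ℝ := N (fun b => N (fun a => t (a * b)) d) e

lemma h_inv (t : ℕ → ℝ) {m n : ℕ} (hm : m ≠ 0) (hn : n ≠ 0) :
    ∑ x ∈ m.divisorsAntidiagonal, ∑ y ∈ n.divisorsAntidiagonal,
      u x.1 * u y.1 * h t x.2 y.2 = t (m * n) := by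
  simp only [mul_assoc, ← Finset.mul_sum]
  simp only [h]
  have : ∀ d, ∑ y ∈ n.divisorsAntidiagonal, u y.1 * N (fun b => N (fun a => t (a * b)) d) y.2
      = N (fun a => t (a * n)) d := fun d => u_N _ hn
  simp only [this]
  exact u_N (fun a => t (a * n)) hm

lemma h_mul (t : ℕ → ℝ) (hmul : ∀ m n : ℕ, Nat.Coprime m n → t (m * n) = t m * t n)
    {d1 e1 d2 e2 : ℕ} (cop : (d1 * e1).Coprime (d2 * e2)) :
    h t (d1 * d2) (e1 * e2) = h t d1 e1 * h t d2 e2 := by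
  have cd : d1.Coprime d2 := cop.coprime_mul_right.coprime_mul_right_right
  have ce : e1.Coprime e2 := cop.coprime_mul_left.coprime_mul_left_right
  simp only [h, N]
  rw [sum_antidiag_coprime (fun x y => nu x * ∑ z ∈ (d1 * d2).divisorsAntidiagonal,
    nu z.1 * t (z.2 * y)) ce, Finset.sum_mul_sum]
  refine Finset.sum_congr rfl fun x hx => Finset.sum_congr rfl fun y hy => ?_
  rw [sum_antidiag_coprime (fun z w => nu z * t (w * (x.2 * y.2))) cd]
  simp only [Nat.mem_divisorsAntidiagonal] at hx hy
  have cx : x.1.Coprime y.1 := by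
    rw [← hx.1, ← hy.1] at ce
    exact ce.coprime_mul_right.coprime_mul_right_right
  have : ∀ z ∈ d1.divisorsAntidiagonal, ∀ w ∈ d2.divisorsAntidiagonal,
      nu (z.1 * w.1) * t (z.2 * w.2 * (x.2 * y.2)) =
      (nu z.1 * t (z.2 * x.2)) * (nu w.1 * t (w.2 * y.2)) := by
    intro z hz w hw
    simp only [Nat.mem_divisorsAntidiagonal] at hz hw
    have c1 : z.1.Coprime w.1 := by
      rw [← hz.1, ← hw.1] at cd
      exact cd.coprime_mul_right.coprime_mul_right_right
    have c2 : (z.2 * x.2).Coprime (w.2 * y.2) := by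
      refine Nat.Coprime.coprime_dvd_left ?_ (Nat.Coprime.coprime_dvd_right ?_ cop)
      · rw [← hz.1, ← hx.1]; exact mul_dvd_mul (Dvd.intro_left _ rfl) (Dvd.intro_left _ rfl)
      · rw [← hw.1, ← hy.1]; exact mul_dvd_mul (Dvd.intro_left _ rfl) (Dvd.intro_left _ rfl)
    rw [show z.2 * w.2 * (x.2 * y.2) = (z.2 * x.2) * (w.2 * y.2) by ring, hmul _ _ c2,
      (mf_mult _).map_mul_of_coprime c1 |> fun e => (e : nu (z.1 * w.1) = nu z.1 * nu w.1)]
    ring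
  rw [Finset.sum_congr rfl fun z hz => Finset.sum_congr rfl (this z hz), ← Finset.sum_mul_sum,
    (mf_mult _).map_mul_of_coprime cx |> fun e => (e : nu (x.1 * y.1) = nu x.1 * nu y.1)]
  ring

/-- `τ(k)` with value one at zero. -/
noncomputable def tt (k : ℕ) : ℝ := if k = 0 then 1 else (Nat.divisors k).card

lemma tt_le (k : ℕ) : |tt k| ≤ k + 1 := by
  unfold tt; split_ifs with hk
  · simp [hk]
  · rw [abs_of_nonneg (by positivity)]
    have := Nat.card_divisors_le_self k
    have : ((Nat.divisors k).card : ℝ) ≤ k := by exact_mod_cast this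
    linarith

lemma h_prime_pow (t : ℕ → ℝ) {p : ℕ} (hp : p.Prime) (ht : ∀ a, t (p ^ a) = tt a) (a b : ℕ) :
    h t (p ^ a) (p ^ b) = ∑ j ∈ range (b + 1), nuc j * ∑ i ∈ range (a + 1), nuc i *
      tt (a - i + (b - j)) := by
  simp only [h, N]
  rw [sum_antidiag_prime_pow (fun x y => nu x * ∑ z ∈ (p ^ a).divisorsAntidiagonal,
    nu z.1 * t (z.2 * y)) hp]
  refine Finset.sum_congr rfl fun j _ => ?_
  rw [sum_antidiag_prime_pow (fun z w => nu z * t (w * p ^ (b - j))) hp, nu_prime_pow hp]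
  congr 1
  refine Finset.sum_congr rfl fun i _ => ?_
  rw [nu_prime_pow hp, ← pow_add, ht]

lemma h_pp_bound (t : ℕ → ℝ) {p : ℕ} (hp : p.Prime) (ht : ∀ a, t (p ^ a) = tt a) (a b : ℕ) :
    |h t (p ^ a) (p ^ b)| ≤ ((a + b : ℕ) + 1 : ℝ) ^ 3 := by
  rw [h_prime_pow t hp ht]
  set K : ℝ := ((a + b : ℕ) + 1 : ℝ) with hK
  have hK0 : 0 ≤ K := by positivity
  have inner : ∀ j, |∑ i ∈ range (a + 1), nuc i * tt (a - i + (b - j))| ≤ K * K := by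
    intro j
    refine (Finset.abs_sum_le_sum_abs _ _).trans ?_
    have : ∀ i ∈ range (a + 1), |nuc i * tt (a - i + (b - j))| ≤ K := by
      intro i _
      rw [abs_mul]
      have h1 := abs_nuc_le i
      have h2 := tt_le (a - i + (b - j))
      have h3 : ((a - i + (b - j) : ℕ) : ℝ) + 1 ≤ K := by
        rw [hK]; gcongr <;> omega
      calc _ ≤ 1 * K := mul_le_mul h1 (h2.trans h3) (abs_nonneg _) zero_le_one
        _ = K := one_mul _
    refine (Finset.sum_le_sum this).trans ?_
    rw [Finset.sum_const, card_range, nsmul_eq_mul]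
    gcongr
    rw [hK]; push_cast; linarith [(Nat.cast_nonneg b : (0:ℝ) ≤ b)]
  refine (Finset.abs_sum_le_sum_abs _ _).trans ?_
  have : ∀ j ∈ range (b + 1), |nuc j * ∑ i ∈ range (a + 1), nuc i * tt (a - i + (b - j))|
      ≤ K * K := by
    intro j _
    rw [abs_mul]
    calc _ ≤ 1 * (K * K) := mul_le_mul (abs_nuc_le j) (inner j) (abs_nonneg _) zero_le_one
      _ = K * K := one_mul _
  refine (Finset.sum_le_sum this).trans ?_
  rw [Finset.sum_const, card_range, nsmul_eq_mul]
  have : ((b + 1 : ℕ) : ℝ) ≤ K := by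
    rw [hK]; push_cast; linarith [(Nat.cast_nonneg a : (0:ℝ) ≤ a)]
  calc _ ≤ K * (K * K) := by gcongr
    _ = K ^ 3 := by ring

lemma tt_zero : tt 0 = 1 := by simp [tt]
lemma tt_one : tt 1 = 1 := by simp [tt]
lemma tt_two : tt 2 = 2 := by simp [tt, Nat.prime_two.divisors]

lemma h_pp_small (t : ℕ → ℝ) {p : ℕ} (hp : p.Prime) (ht : ∀ a, t (p ^ a) = tt a) :
    h t (p ^ 0) (p ^ 0) = 1 ∧ h t (p ^ 1) (p ^ 0) = 0 ∧ h t (p ^ 0) (p ^ 1) = 0 ∧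
    h t (p ^ 2) (p ^ 0) = 0 ∧ h t (p ^ 0) (p ^ 2) = 0 := by
  simp only [h_prime_pow t hp ht]
  refine ⟨?_, ?_, ?_, ?_, ?_⟩ <;>
    norm_num [Finset.sum_range_succ, nuc, tt_zero, tt_one, tt_two]


lemma summable_of_mult (f : ℕ → ℝ) (hf0 : f 0 = 0) (hf1 : f 1 = 1) (hnn : ∀ n, 0 ≤ f n)
    (hmul : ∀ {m n : ℕ}, m.Coprime n → f (m * n) = f m * f n)
    (g : ℕ → ℝ) (hg : Summable g) (r : ℝ) (hr : 1 < r)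
    (hb : ∀ p k : ℕ, p.Prime → f (p ^ (k + 1)) ≤ g k * (p : ℝ) ^ (-r)) :
    Summable f := by
  have hsum1 : ∀ {p : ℕ}, p.Prime → Summable (fun n : ℕ ↦ f (p ^ n)) := by
    intro p hp
    rw [← summable_nat_add_iff 1]
    exact Summable.of_nonneg_of_le (fun _ => hnn _) (fun k => hb p k hp) (hg.mul_right _)
  have hsum : ∀ {p : ℕ}, p.Prime → Summable (fun n : ℕ ↦ ‖f (p ^ n)‖) := by
    intro p hp
    simpa only [Real.norm_of_nonneg (hnn _)] using hsum1 hp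
  set G := ∑' k, g k with hG
  have hS : Summable (fun n : ℕ => (n : ℝ) ^ (-r)) := Real.summable_nat_rpow.mpr (by linarith)
  have hG0 : 0 ≤ G := by
    have h2 : ∀ k, 0 ≤ g k := by
      intro k
      have := (hnn _).trans (hb 2 k Nat.prime_two)
      have h3 : (0:ℝ) < ((2 : ℕ) : ℝ) ^ (-r) := by positivity
      exact nonneg_of_mul_nonneg_left this h3
    exact tsum_nonneg h2
  refine summable_of_sum_range_le (c := Real.exp (G * ∑' n : ℕ, (n : ℝ) ^ (-r))) hnn fun M => ?_
  have key := (EulerProduct.summable_and_hasSum_smoothNumbers_prod_primesBelow_tsum hf1 hmul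
    hsum M).2
  have k2 := (hasSum_subtype_iff_indicator (f := f) (s := (M.smoothNumbers : Set ℕ))).mp key
  have h1 : ∑ n ∈ range M, f n ≤ ∏ p ∈ M.primesBelow, ∑' n : ℕ, f (p ^ n) := by
    refine le_trans (Finset.sum_le_sum fun n hn => ?_) (sum_le_hasSum (range M) ?_ k2)
    · rcases Nat.eq_zero_or_pos n with rfl | hpos
      · rw [hf0]; exact Set.indicator_nonneg (fun _ _ => hnn _) _
      · rw [Set.indicator_of_mem]
        exact Nat.mem_smoothNumbers_of_lt hpos (by simpa using hn)
    · intro n _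
      exact Set.indicator_nonneg (fun _ _ => hnn _) _
  refine h1.trans ?_
  have h2 : ∀ p ∈ M.primesBelow, ∑' n : ℕ, f (p ^ n) ≤ Real.exp (G * (p : ℝ) ^ (-r)) := by
    intro p hp
    have hp := Nat.prime_of_mem_primesBelow hp
    rw [(hsum1 hp).tsum_eq_zero_add, pow_zero, hf1]
    have : ∑' k, f (p ^ (k + 1)) ≤ G * (p : ℝ) ^ (-r) := by
      rw [hG, ← tsum_mul_right]
      exact ((summable_nat_add_iff 1).mpr (hsum1 hp)).tsum_le_tsum (fun k => hb p k hp)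
        (hg.mul_right _)
    have := Real.add_one_le_exp (G * (p : ℝ) ^ (-r))
    linarith
  refine (Finset.prod_le_prod (fun p _ => tsum_nonneg fun _ => hnn _) h2).trans ?_
  rw [← Real.exp_sum, ← Finset.mul_sum]
  gcongr
  exact hS.sum_le_tsum _ (fun _ _ => by positivity)

/-- weighted absolute value -/
noncomputable def wt (t : ℕ → ℝ) (α β : ℝ) (d e : ℕ) : ℝ :=
  |h t d e| * (d : ℝ) ^ (-α) * (e : ℝ) ^ (-β)

lemma wt_nonneg (t : ℕ → ℝ) (α β : ℝ) (d e : ℕ) : 0 ≤ wt t α β d e := by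
  unfold wt; positivity

noncomputable def wf (t : ℕ → ℝ) (α β : ℝ) (n : ℕ) : ℝ :=
  ∑ x ∈ n.divisorsAntidiagonal, wt t α β x.1 x.2

lemma wf_mul (t : ℕ → ℝ) (hmul : ∀ m n : ℕ, Nat.Coprime m n → t (m * n) = t m * t n)
    (α β : ℝ) {m n : ℕ} (cop : m.Coprime n) :
    wf t α β (m * n) = wf t α β m * wf t α β n := by
  unfold wf
  rw [sum_antidiag_coprime (wt t α β) cop, Finset.sum_mul_sum]
  refine Finset.sum_congr rfl fun x hx => Finset.sum_congr rfl fun y hy => ?_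
  simp only [Nat.mem_divisorsAntidiagonal] at hx hy
  unfold wt
  rw [h_mul t hmul (by rw [hx.1, hy.1]; exact cop), abs_mul]
  push_cast
  rw [Real.mul_rpow (by positivity) (by positivity), Real.mul_rpow (by positivity) (by positivity)]
  ring

lemma wt_pp (t : ℕ → ℝ) (α β : ℝ) {p : ℕ} (hp : p.Prime) (a b : ℕ) :
    wt t α β (p ^ a) (p ^ b) = |h t (p ^ a) (p ^ b)| * (p : ℝ) ^ (-(α * a + β * b)) := by
  have hp0 : (0 : ℝ) < p := by exact_mod_cast hp.pos
  unfold wt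
  push_cast
  rw [mul_assoc, ← Real.rpow_natCast, ← Real.rpow_natCast, ← Real.rpow_mul hp0.le,
    ← Real.rpow_mul hp0.le, ← Real.rpow_add hp0]
  congr 2; ring

lemma wt_pp_bound (t : ℕ → ℝ) (α β : ℝ) (hα : 3 / 7 ≤ α) (hβ : 3 / 7 ≤ β)
    (hαβ : 10 / 7 ≤ α + β) {p : ℕ} (hp : p.Prime) (ht : ∀ a, t (p ^ a) = tt a)
    (a b : ℕ) (hab : 1 ≤ a + b) :
    wt t α β (p ^ a) (p ^ b) ≤ ((a + b : ℕ) + 1 : ℝ) ^ 3 *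
      ((2 : ℝ) ^ (-(3 / 7 * ((a + b : ℕ) - 3 : ℝ))) * (p : ℝ) ^ (-(9 / 7) : ℝ)) := by
  have hp2 : (2 : ℝ) ≤ p := by exact_mod_cast hp.two_le
  have hp0 : (0 : ℝ) < p := by linarith
  obtain ⟨h00, h10, h01, h20, h02⟩ := h_pp_small t hp ht
  rw [wt_pp t α β hp]
  have hbd := h_pp_bound t hp ht a b
  by_cases hz : h t (p ^ a) (p ^ b) = 0
  · rw [hz, abs_zero, zero_mul]; positivity
  refine mul_le_mul hbd ?_ (by positivity) (by positivity)
  by_cases hk : 3 ≤ a + b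
  · have hk' : (3 : ℝ) ≤ (a + b : ℕ) := by exact_mod_cast hk
    calc (p : ℝ) ^ (-(α * a + β * b)) ≤ (p : ℝ) ^ (-(3 / 7 * (a + b : ℕ) : ℝ)) := by
          apply Real.rpow_le_rpow_of_exponent_le (by linarith)
          push_cast
          nlinarith [mul_le_mul_of_nonneg_right hα (Nat.cast_nonneg a : (0:ℝ) ≤ a),
            mul_le_mul_of_nonneg_right hβ (Nat.cast_nonneg b : (0:ℝ) ≤ b)]
      _ = (p : ℝ) ^ (-(3 / 7 * ((a + b : ℕ) - 3 : ℝ))) * (p : ℝ) ^ (-(9 / 7) : ℝ) := by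
          rw [← Real.rpow_add hp0]; congr 1; ring
      _ ≤ _ := by
          refine mul_le_mul_of_nonneg_right ?_ (by positivity)
          exact Real.rpow_le_rpow_of_nonpos (by norm_num) hp2 (by linarith)
  · have hab1 : a = 1 ∧ b = 1 := by
      have ha : a ≤ 2 := by omega
      have hb : b ≤ 2 := by omega
      interval_cases a <;> interval_cases b <;> first | omega | (exfalso; exact hz (by assumption))
    obtain ⟨rfl, rfl⟩ := hab1
    have e1 : (1 : ℝ) ≤ (2 : ℝ) ^ (-(3 / 7 * ((1 + 1 : ℕ) - 3 : ℝ))) :=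
      Real.one_le_rpow (by norm_num) (by norm_num)
    have e2 : (p : ℝ) ^ (-(α * (1 : ℕ) + β * (1 : ℕ))) ≤ (p : ℝ) ^ (-(9 / 7) : ℝ) := by
      apply Real.rpow_le_rpow_of_exponent_le (by linarith)
      push_cast; linarith
    calc _ ≤ 1 * (p : ℝ) ^ (-(9 / 7) : ℝ) := by rw [one_mul]; exact e2
      _ ≤ _ := mul_le_mul_of_nonneg_right e1 (by positivity)

lemma summable_g : Summable (fun k : ℕ => ((k + 1 : ℕ) + 1 : ℝ) ^ 4 *
    (2 : ℝ) ^ (-(3 / 7 * ((k + 1 : ℕ) - 3 : ℝ)))) := by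
  set q : ℝ := (2 : ℝ) ^ (-(3 / 7) : ℝ) with hq
  have hq0 : 0 < q := by positivity
  have hq1 : q < 1 := Real.rpow_lt_one_of_one_lt_of_neg (by norm_num) (by norm_num)
  have h1 : Summable (fun n : ℕ => (n : ℝ) ^ 4 * q ^ n) :=
    summable_pow_mul_geometric_of_norm_lt_one 4 (by rwa [Real.norm_of_nonneg hq0.le])
  have h2 := ((summable_nat_add_iff 2).mpr h1).mul_left ((2 : ℝ) ^ (12 / 7 : ℝ))
  refine h2.congr fun k => ?_
  have : (2 : ℝ) ^ (-(3 / 7 * ((k + 1 : ℕ) - 3 : ℝ))) = (2 : ℝ) ^ (12 / 7 : ℝ) * q ^ (k + 2) := by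
    rw [hq, ← Real.rpow_natCast, ← Real.rpow_mul (by norm_num), ← Real.rpow_add (by norm_num)]
    congr 1; push_cast; ring
  rw [this]; push_cast; ring

lemma wf_summable (t : ℕ → ℝ) (hmul : ∀ m n : ℕ, Nat.Coprime m n → t (m * n) = t m * t n)
    (ht : ∀ p a : ℕ, p.Prime → t (p ^ a) = tt a)
    (α β : ℝ) (hα : 3 / 7 ≤ α) (hβ : 3 / 7 ≤ β) (hαβ : 10 / 7 ≤ α + β) :
    Summable (wf t α β) := by
  refine summable_of_mult _ (by simp [wf]) ?_ (fun n => Finset.sum_nonneg fun x _ => wt_nonneg _ _ _ _ _)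
    (wf_mul t hmul α β) _ summable_g (9 / 7) (by norm_num) ?_
  · have := (h_pp_small t Nat.prime_two (fun a => ht 2 a Nat.prime_two)).1
    simp only [pow_zero] at this
    simp [wf, wt, this]
  · intro p k hp
    unfold wf
    rw [sum_antidiag_prime_pow (wt t α β) hp]
    have : ∀ i ∈ range (k + 1 + 1), wt t α β (p ^ i) (p ^ (k + 1 - i)) ≤
        ((k + 1 : ℕ) + 1 : ℝ) ^ 3 *
      ((2 : ℝ) ^ (-(3 / 7 * ((k + 1 : ℕ) - 3 : ℝ))) * (p : ℝ) ^ (-(9 / 7) : ℝ)) := by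
      intro i hi
      have e : i + (k + 1 - i) = k + 1 := by simp at hi; omega
      have := wt_pp_bound t α β hα hβ hαβ hp (fun a => ht p a hp) i (k + 1 - i) (by omega)
      rwa [e] at this
    refine (Finset.sum_le_sum this).trans (le_of_eq ?_)
    rw [Finset.sum_const, card_range, nsmul_eq_mul]
    push_cast; ring

lemma wt_summable (t : ℕ → ℝ) (hmul : ∀ m n : ℕ, Nat.Coprime m n → t (m * n) = t m * t n)
    (ht : ∀ p a : ℕ, p.Prime → t (p ^ a) = tt a)
    (α β : ℝ) (hα : 3 / 7 ≤ α) (hβ : 3 / 7 ≤ β) (hαβ : 10 / 7 ≤ α + β) :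
    Summable (fun x : ℕ × ℕ => wt t α β x.1 x.2) := by
  have hS := wf_summable t hmul ht α β hα hβ hαβ
  refine summable_of_sum_le (c := ∑' n, wf t α β n) (fun x => wt_nonneg _ _ _ _ _) fun s => ?_
  have h0 : ∀ x : ℕ × ℕ, wt t α β x.1 x.2 ≠ 0 → x.1 * x.2 ≠ 0 := by
    intro x hx h0
    apply hx
    rcases mul_eq_zero.mp h0 with h0 | h0 <;> simp [wt, h, N, h0]
  calc ∑ x ∈ s, wt t α β x.1 x.2
      ≤ ∑ x ∈ (s.image fun x => x.1 * x.2).sigma fun n => n.divisorsAntidiagonal,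
          wt t α β x.2.1 x.2.2 := by
        rw [← Finset.sum_filter_ne_zero]
        refine le_trans (le_of_eq (Finset.sum_map (s.filter fun x => wt t α β x.1 x.2 ≠ 0)
          ⟨fun x => (⟨x.1 * x.2, x⟩ : (_ : ℕ) × (ℕ × ℕ)),
            fun x y hxy => by simpa using congrArg (fun z => z.2) hxy⟩
          (fun x => wt t α β x.2.1 x.2.2)).symm) ?_
        refine Finset.sum_le_sum_of_subset_of_nonneg ?_ fun _ _ _ => wt_nonneg _ _ _ _ _
        intro z hz
        simp only [Finset.mem_map, Finset.mem_filter] at hz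
        obtain ⟨x, ⟨hxs, hx⟩, rfl⟩ := hz
        simp only [Finset.mem_sigma, Nat.mem_divisorsAntidiagonal]
        exact ⟨Finset.mem_image_of_mem _ hxs, rfl, h0 x hx⟩
    _ = ∑ n ∈ s.image fun x => x.1 * x.2, wf t α β n := by
        rw [Finset.sum_sigma]; rfl
    _ ≤ _ := hS.sum_le_tsum _ (fun n _ => Finset.sum_nonneg fun x _ => wt_nonneg _ _ _ _ _)


lemma squeeze (a b : ℕ → ℝ) (ha : ∀ n, a n ≤ a (n + 1)) (hb : ∀ n, b (n + 1) ≤ b n)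
    (hab : ∀ n, a n ≤ b n) : ∃ c, ∀ n, a n ≤ c ∧ c ≤ b n := by
  have ha' := monotone_nat_of_le_succ ha
  have hb' := antitone_nat_of_succ_le hb
  have key : ∀ m n, a m ≤ b n := fun m n =>
    (ha' (le_max_left m n)).trans ((hab _).trans (hb' (le_max_right m n)))
  exact ⟨⨆ n, a n, fun n => ⟨le_ciSup (f := a) ⟨b 0, by rintro _ ⟨m, rfl⟩; exact key m 0⟩ n,
    ciSup_le fun m => key m n⟩⟩

lemma sum_inv_sq : ∃ c : ℝ, ∀ B : ℕ, 1 ≤ B →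
    |∑ b ∈ Ioc 0 B, 1 / (b : ℝ) ^ 2 - (c - 1 / B)| ≤ 1 / (B : ℝ) ^ 2 := by
  obtain ⟨c, hc⟩ := squeeze
    (fun n => ∑ b ∈ Ioc 0 (n + 1), 1 / (b : ℝ) ^ 2 + 1 / (n + 2))
    (fun n => ∑ b ∈ Ioc 0 (n + 1), 1 / (b : ℝ) ^ 2 + 1 / (n + 1))
    (by
      intro n
      rw [Finset.sum_Ioc_succ_top (by omega : 0 ≤ n + 1)]
      push_cast
      have : 1 / ((n:ℝ) + 2) ≤ 1 / ((n:ℝ) + 1 + 1) ^ 2 + 1 / (n + 1 + 2) := by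
        rw [div_add_div _ _ (by positivity) (by positivity), div_le_div_iff₀ (by positivity) (by positivity)]
        nlinarith [(Nat.cast_nonneg n : (0:ℝ) ≤ n)]
      linarith)
    (by
      intro n
      rw [Finset.sum_Ioc_succ_top (by omega : 0 ≤ n + 1)]
      push_cast
      have : 1 / ((n:ℝ) + 1 + 1) ^ 2 + 1 / (n + 1 + 1) ≤ 1 / ((n:ℝ) + 1) := by
        rw [div_add_div _ _ (by positivity) (by positivity), div_le_div_iff₀ (by positivity) (by positivity)]
        nlinarith [(Nat.cast_nonneg n : (0:ℝ) ≤ n)]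
      linarith)
    (by
      intro n
      have : 1 / ((n:ℝ) + 2) ≤ 1 / (n + 1) := by gcongr; norm_num
      simpa using this)
  refine ⟨c, fun B hB => ?_⟩
  obtain ⟨n, rfl⟩ := Nat.exists_eq_add_of_le' hB
  obtain ⟨h1, h2⟩ := hc n
  have : (0:ℝ) < n + 1 := by positivity
  have e : 1 / ((n:ℝ) + 1) - 1 / (n + 2) ≤ 1 / ((n:ℝ) + 1) ^ 2 := by
    rw [div_sub_div _ _ (by positivity) (by positivity), div_le_div_iff₀ (by positivity) (by positivity)]
    nlinarith
  have e' : 0 ≤ 1 / ((n:ℝ) + 1) ^ 2 := by positivity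
  push_cast at *
  rw [abs_le]; constructor <;> linarith

lemma sum_inv_sqrt : ∃ c : ℝ, ∀ A : ℕ, 1 ≤ A →
    |∑ a ∈ Ioc 0 A, 1 / √(a : ℝ) - (2 * √(A : ℝ) + c)| ≤ 1 / √(A : ℝ) := by
  have key : ∀ n : ℕ, 1 / √((n : ℝ) + 2) ≤ 2 * √((n:ℝ) + 2) - 2 * √((n:ℝ) + 1) ∧
      2 * √((n:ℝ) + 2) - 2 * √((n:ℝ) + 1) ≤ 1 / √((n : ℝ) + 1) := by
    intro n
    have p1 : 0 < √((n:ℝ) + 1) := by positivity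
    have p2 : 0 < √((n:ℝ) + 2) := by positivity
    have s1 := Real.sq_sqrt (show (0:ℝ) ≤ (n:ℝ) + 1 by positivity)
    have s2 := Real.sq_sqrt (show (0:ℝ) ≤ (n:ℝ) + 2 by positivity)
    set r := √((n:ℝ) + 1)
    set s := √((n:ℝ) + 2)
    constructor
    · rw [div_le_iff₀ p2]; nlinarith [sq_nonneg (r - s)]
    · rw [le_div_iff₀ p1]; nlinarith [sq_nonneg (r - s)]
  obtain ⟨c, hc⟩ := squeeze
    (fun n => ∑ b ∈ Ioc 0 (n + 1), 1 / √(b : ℝ) - 2 * √((n:ℝ) + 1) - 1 / √((n:ℝ) + 1))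
    (fun n => ∑ b ∈ Ioc 0 (n + 1), 1 / √(b : ℝ) - 2 * √((n:ℝ) + 1))
    (by
      intro n
      rw [Finset.sum_Ioc_succ_top (by omega : 0 ≤ n + 1)]
      have := key n
      push_cast
      rw [show (n:ℝ) + 1 + 1 = n + 2 by ring]
      linarith)
    (by
      intro n
      rw [Finset.sum_Ioc_succ_top (by omega : 0 ≤ n + 1)]
      have := key n
      push_cast
      rw [show (n:ℝ) + 1 + 1 = n + 2 by ring]
      linarith)
    (by
      intro n
      have e' : 0 ≤ 1 / √((n:ℝ) + 1) := by positivity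
      simpa using e')
  refine ⟨c, fun B hB => ?_⟩
  obtain ⟨n, rfl⟩ := Nat.exists_eq_add_of_le' hB
  obtain ⟨h1, h2⟩ := hc n
  have e' : 0 ≤ 1 / √((n:ℝ) + 1) := by positivity
  push_cast at *
  rw [abs_le]; constructor <;> linarith

lemma hyperbola (M B : ℕ) (hB : 1 ≤ B) (hBM : B ≤ M.sqrt) :
    ∑ b ∈ Ioc 0 M.sqrt, M / b ^ 2 =
      ∑ b ∈ Ioc 0 B, M / b ^ 2 + ∑ a ∈ Ioc 0 (M / B ^ 2), ((M / a).sqrt - B) := by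
  rw [← Finset.sum_Ioc_consecutive _ (Nat.zero_le B) hBM]
  congr 1
  have h1 : ∀ b ∈ Ioc B M.sqrt, M / b ^ 2 =
      ∑ a ∈ Ioc 0 (M / B ^ 2), if a * b ^ 2 ≤ M then 1 else 0 := by
    intro b hb
    rw [mem_Ioc] at hb
    have hb0 : 0 < b ^ 2 := by have : 0 < b := by omega
                               positivity
    rw [← Finset.sum_filter, Finset.sum_const, smul_eq_mul, mul_one]
    have : (Ioc 0 (M / B ^ 2)).filter (fun a => a * b ^ 2 ≤ M) = Ioc 0 (M / b ^ 2) := by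
      ext a
      simp only [mem_filter, mem_Ioc, Nat.le_div_iff_mul_le hb0,
        Nat.le_div_iff_mul_le (show 0 < B ^ 2 by positivity)]
      refine ⟨fun h => ⟨h.1.1, h.2⟩, fun h => ⟨⟨h.1, le_trans ?_ h.2⟩, h.2⟩⟩
      gcongr; omega
    rw [this]; simp
  rw [Finset.sum_congr rfl h1, Finset.sum_comm]
  refine Finset.sum_congr rfl fun a ha => ?_
  rw [mem_Ioc] at ha
  rw [← Finset.sum_filter, Finset.sum_const, smul_eq_mul, mul_one]
  have : (Ioc B M.sqrt).filter (fun b => a * b ^ 2 ≤ M) = Ioc B (M / a).sqrt := by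
    ext b
    simp only [mem_filter, mem_Ioc, Nat.le_sqrt', Nat.le_div_iff_mul_le ha.1]
    rw [mul_comm a]
    refine ⟨fun h => ⟨h.1.1, h.2⟩, fun h => ⟨⟨h.1, le_trans ?_ h.2⟩, h.2⟩⟩
    exact Nat.le_mul_of_pos_right _ ha.1
  rw [this]; simp

noncomputable def D (y : ℝ) : ℝ := ∑ n ∈ Ioc 0 ⌊y⌋₊, u n

lemma D_eq (y : ℝ) : D y = ((∑ b ∈ Ioc 0 (⌊y⌋₊).sqrt, ⌊y⌋₊ / b ^ 2 : ℕ) : ℝ) := by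
  unfold D u
  rw [sum_Ioc_mul_zeta_eq_sum]
  set M := ⌊y⌋₊
  push_cast
  have hinj : Set.InjOn (fun b : ℕ => b ^ 2) (Ioc 0 M.sqrt : Finset ℕ) := by
    intro a _ b _ hab
    exact Nat.pow_left_injective (n := 2) (by norm_num) hab
  rw [← Finset.sum_image (f := fun s : ℕ => ((M / s : ℕ) : ℝ)) hinj]
  have : (Ioc 0 M.sqrt).image (fun b => b ^ 2) = (Ioc 0 M).filter (fun n => n ≠ 0 ∧ IsSquare n) := by
    ext n
    simp only [mem_image, mem_Ioc, mem_filter, Nat.le_sqrt']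
    constructor
    · rintro ⟨b, ⟨h1, h2⟩, rfl⟩
      have : 0 < b ^ 2 := by positivity
      exact ⟨⟨this, h2⟩, this.ne', ⟨b, sq b⟩⟩
    · rintro ⟨⟨h1, h2⟩, h3, ⟨b, rfl⟩⟩
      exact ⟨b, ⟨Nat.pos_of_mul_pos_right h1, by rw [sq]; exact h2⟩, sq b⟩
  rw [this, Finset.sum_filter]
  refine Finset.sum_congr rfl fun n _ => ?_
  rw [sqi_apply]
  split_ifs <;> simp

lemma D_asymp : ∃ c₂ c : ℝ, ∀ y : ℝ, 1 ≤ y →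
    |D y - c₂ * y - c * √y| ≤ 12 * y ^ (1 / 3 : ℝ) := by
  obtain ⟨c₂, hc₂⟩ := sum_inv_sq
  obtain ⟨c, hc⟩ := sum_inv_sqrt
  refine ⟨c₂, c, fun y hy => ?_⟩
  have hy0 : 0 < y := by linarith
  set w := y ^ (1 / 3 : ℝ) with hw
  have hw3 : w ^ 3 = y := by
    rw [hw, ← Real.rpow_natCast, ← Real.rpow_mul hy0.le]; norm_num
  have hw1 : 1 ≤ w := Real.one_le_rpow hy (by norm_num)
  set B := ⌊w⌋₊ with hBdef
  have hB1 : 1 ≤ B := Nat.one_le_floor_iff _ |>.mpr hw1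
  have hB1' : (1:ℝ) ≤ B := by exact_mod_cast hB1
  have hBw : (B:ℝ) ≤ w := Nat.floor_le (by linarith)
  have hwB : w < B + 1 := Nat.lt_floor_add_one w
  set M := ⌊y⌋₊ with hM
  have hMy : (M:ℝ) ≤ y := Nat.floor_le hy0.le
  have hyM : y < M + 1 := Nat.lt_floor_add_one y
  have hBM : B ≤ M.sqrt := by
    rw [Nat.le_sqrt', hM]
    apply Nat.le_floor
    push_cast
    calc (B:ℝ) ^ 2 ≤ w ^ 2 := by gcongr
      _ ≤ w ^ 3 := pow_le_pow_right₀ hw1 (by norm_num)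
      _ = y := hw3
  rw [D_eq, ← hM, hyperbola M B hB1 hBM]
  set A := M / B ^ 2 with hA
  set z := y / (B:ℝ) ^ 2 with hz
  have hAfl : A = ⌊z⌋₊ := by
    rw [hA, hz, hM, ← Nat.floor_div_natCast]; push_cast; rfl
  have hzw : w ≤ z := by
    rw [hz, le_div_iff₀ (by positivity), ← hw3]
    calc w * (B:ℝ) ^ 2 ≤ w * w ^ 2 := by gcongr
      _ = w ^ 3 := by ring
  have hz4 : z ≤ 4 * w := by
    rw [hz, div_le_iff₀ (by positivity), ← hw3]
    have : w ≤ 2 * B := by linarith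
    calc w ^ 3 = w * w ^ 2 := by ring
      _ ≤ w * (2 * B) ^ 2 := by gcongr
      _ = _ := by ring
  have hz0 : 0 < z := by linarith
  have hA1 : 1 ≤ A := by rw [hAfl]; exact (Nat.one_le_floor_iff _).mpr (by linarith)
  have hA1' : (1:ℝ) ≤ A := by exact_mod_cast hA1
  have hAz : (A:ℝ) ≤ z := by rw [hAfl]; exact Nat.floor_le hz0.le
  have hzA : z < A + 1 := by rw [hAfl]; exact Nat.lt_floor_add_one z
  -- first sum
  have hP : |∑ b ∈ Ioc 0 B, ((M / b ^ 2 : ℕ) : ℝ) - y * ∑ b ∈ Ioc 0 B, 1 / (b:ℝ) ^ 2| ≤ B := by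
    rw [Finset.mul_sum, ← Finset.sum_sub_distrib]
    refine (Finset.abs_sum_le_sum_abs _ _).trans ?_
    calc _ ≤ ∑ b ∈ Ioc 0 B, (1:ℝ) := by
          refine Finset.sum_le_sum fun b hb => ?_
          have hbp : 0 < b := (mem_Ioc.mp hb).1
          have e : ((M / b ^ 2 : ℕ) : ℝ) = (⌊y / ((b ^ 2 : ℕ) : ℝ)⌋₊ : ℝ) := by
            rw [Nat.floor_div_natCast]
          have f1 := Nat.floor_le (show 0 ≤ y / ((b ^ 2 : ℕ) : ℝ) by positivity)
          have f2 := Nat.lt_floor_add_one (y / ((b ^ 2 : ℕ) : ℝ))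
          rw [e]
          rw [show y * (1 / (b:ℝ) ^ 2) = y / ((b ^ 2 : ℕ) : ℝ) by push_cast; ring]
          rw [abs_le]; constructor <;> linarith
      _ = B := by simp
  -- second sum
  have hQ : |∑ a ∈ Ioc 0 A, (((M / a).sqrt - B : ℕ) : ℝ) -
      (√y * ∑ a ∈ Ioc 0 A, 1 / √(a:ℝ) - A * B)| ≤ A := by
    have : (A:ℝ) * B = ∑ a ∈ Ioc 0 A, (B:ℝ) := by simp
    rw [this, Finset.mul_sum, ← Finset.sum_sub_distrib, ← Finset.sum_sub_distrib]
    refine (Finset.abs_sum_le_sum_abs _ _).trans ?_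
    calc _ ≤ ∑ a ∈ Ioc 0 A, (1:ℝ) := by
          refine Finset.sum_le_sum fun a ha => ?_
          obtain ⟨ha0, haA⟩ := mem_Ioc.mp ha
          have hle : B ≤ (M / a).sqrt := by
            rw [Nat.le_sqrt', Nat.le_div_iff_mul_le ha0, mul_comm]
            rwa [hA, Nat.le_div_iff_mul_le (by positivity)] at haA
          rw [Nat.cast_sub hle]
          set s := (M / a).sqrt with hs
          have ha0' : (0:ℝ) < a := by exact_mod_cast ha0
          have l1 : s ^ 2 * a ≤ M := by
            rw [← Nat.le_div_iff_mul_le ha0]; exact Nat.sqrt_le' _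
          have l2 : M + 1 ≤ (s + 1) ^ 2 * a := by
            have : M / a < (s + 1) ^ 2 := Nat.lt_succ_sqrt' _
            rw [Nat.div_lt_iff_lt_mul ha0] at this
            omega
          have l1' : (s:ℝ) ^ 2 * a ≤ M := by exact_mod_cast l1
          have l2' : (M:ℝ) + 1 ≤ ((s:ℝ) + 1) ^ 2 * a := by exact_mod_cast l2
          have q1 : (s:ℝ) ≤ √y * (1 / √(a:ℝ)) := by
            rw [mul_one_div, ← Real.sqrt_div hy0.le]
            apply Real.le_sqrt_of_sq_le
            rw [le_div_iff₀ ha0']; linarith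
          have q2 : √y * (1 / √(a:ℝ)) ≤ s + 1 := by
            rw [mul_one_div, ← Real.sqrt_div hy0.le]
            apply Real.sqrt_le_iff.mpr ⟨by positivity, ?_⟩
            rw [div_le_iff₀ ha0']; linarith
          rw [abs_le]; constructor <;> linarith
      _ = A := by simp
  have h2 := hc₂ B hB1
  have h3 := hc A hA1
  set S2 := ∑ b ∈ Ioc 0 B, 1 / (b:ℝ) ^ 2
  set S1 := ∑ a ∈ Ioc 0 A, 1 / √(a:ℝ)
  have h2' : |y * S2 - (c₂ * y - y / B)| ≤ z := by
    have : y * S2 - (c₂ * y - y / B) = y * (S2 - (c₂ - 1 / B)) := by ring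
    rw [this, abs_mul, abs_of_pos hy0, hz, div_eq_mul_one_div y]
    gcongr
  have hsy : √y = B * √z := by
    rw [hz, Real.sqrt_div hy0.le, Real.sqrt_sq (by positivity)]; field_simp
  have hsA : 0 < √(A:ℝ) := by positivity
  have hszA : √z ≤ 2 * √(A:ℝ) := by
    apply Real.sqrt_le_iff.mpr ⟨by positivity, ?_⟩
    rw [mul_pow, Real.sq_sqrt (by positivity)]; linarith
  have h3' : |√y * S1 - (2 * √y * √(A:ℝ) + c * √y)| ≤ 2 * B := by
    have : √y * S1 - (2 * √y * √(A:ℝ) + c * √y) = √y * (S1 - (2 * √(A:ℝ) + c)) := by ring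
    rw [this, abs_mul, abs_of_nonneg (Real.sqrt_nonneg y)]
    calc √y * |S1 - (2 * √(A:ℝ) + c)| ≤ √y * (1 / √(A:ℝ)) := by gcongr
      _ = B * (√z / √(A:ℝ)) := by rw [hsy]; ring
      _ ≤ B * 2 := by
          gcongr
          rw [div_le_iff₀ hsA]; exact hszA
      _ = _ := by ring
  have h4 : |-(y / B) + 2 * √y * √(A:ℝ) - A * B| ≤ B := by
    have e1 : y / B = B * z := by rw [hz]; field_simp
    have : -(y / B) + 2 * √y * √(A:ℝ) - A * B = -(B * (√z - √(A:ℝ)) ^ 2) := by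
      have q1 := Real.sq_sqrt hz0.le
      have q2 := Real.sq_sqrt (show (0:ℝ) ≤ A by positivity)
      rw [e1, hsy]; linear_combination (B:ℝ) * q1 + (B:ℝ) * q2
    rw [this, abs_neg, abs_of_nonneg (by positivity)]
    have g1 : √(A:ℝ) ≤ √z := Real.sqrt_le_sqrt hAz
    have g2 : √z ≤ √(A:ℝ) + 1 := by
      apply Real.sqrt_le_iff.mpr ⟨by positivity, ?_⟩
      have q2 := Real.sq_sqrt (show (0:ℝ) ≤ A by positivity)
      nlinarith
    have : (√z - √(A:ℝ)) ^ 2 ≤ 1 := by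
      rw [sq_le_one_iff₀ (by linarith)]; linarith
    calc _ ≤ (B:ℝ) * 1 := by gcongr
      _ = B := mul_one _
  push_cast at hP hQ ⊢
  rw [abs_le] at *
  constructor <;> linarith [hP.1, hP.2, hQ.1, hQ.2, h2'.1, h2'.2, h3'.1, h3'.2, h4.1, h4.2]

lemma D_lt_one {y : ℝ} (hy : y < 1) : D y = 0 := by
  unfold D
  rw [Nat.floor_eq_zero.mpr hy]; simp

lemma D_bounds : ∃ c₂ c K : ℝ, 0 ≤ K ∧ ∀ y : ℝ, 0 < y →
    |D y - c₂ * y - c * y ^ (1 / 2 : ℝ)| ≤ K * y ^ (3 / 7 : ℝ) ∧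
    |D y - c₂ * y| ≤ K * y ^ (5 / 7 : ℝ) := by
  obtain ⟨c₂, c, hD⟩ := D_asymp
  refine ⟨c₂, c, 12 + |c₂| + |c|, by positivity, fun y hy => ?_⟩
  have a1 := abs_nonneg c₂
  have a2 := abs_nonneg c
  by_cases h1 : 1 ≤ y
  · have := hD y h1
    rw [Real.sqrt_eq_rpow] at this
    have e1 : y ^ (1 / 3 : ℝ) ≤ y ^ (3 / 7 : ℝ) :=
      Real.rpow_le_rpow_of_exponent_le h1 (by norm_num)
    have e2 : y ^ (1 / 3 : ℝ) ≤ y ^ (5 / 7 : ℝ) :=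
      Real.rpow_le_rpow_of_exponent_le h1 (by norm_num)
    have e3 : y ^ (1 / 2 : ℝ) ≤ y ^ (5 / 7 : ℝ) :=
      Real.rpow_le_rpow_of_exponent_le h1 (by norm_num)
    have p1 : 0 ≤ y ^ (3 / 7 : ℝ) := by positivity
    have p2 : 0 ≤ y ^ (5 / 7 : ℝ) := by positivity
    have p3 : 0 ≤ y ^ (1 / 2 : ℝ) := by positivity
    constructor
    · nlinarith [mul_nonneg a1 p1, mul_nonneg a2 p1]
    · have : |D y - c₂ * y| ≤ 12 * y ^ (1 / 3 : ℝ) + |c| * y ^ (1 / 2 : ℝ) := by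
        calc |D y - c₂ * y| = |(D y - c₂ * y - c * y ^ (1 / 2 : ℝ)) + c * y ^ (1 / 2 : ℝ)| := by
              congr 1; ring
          _ ≤ _ := (abs_add_le _ _).trans (by rw [abs_mul, abs_of_nonneg p3]; gcongr)
      nlinarith [mul_nonneg a1 p2, mul_le_mul_of_nonneg_left e3 a2]
  · push Not at h1
    rw [D_lt_one h1]
    have mono : ∀ r : ℝ, r ≤ 1 → y ≤ y ^ r := by
      intro r hr
      calc y = y ^ (1:ℝ) := (Real.rpow_one y).symm
        _ ≤ _ := Real.rpow_le_rpow_of_exponent_ge hy h1.le hr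
    have e1 := mono (3 / 7) (by norm_num)
    have e2 := mono (5 / 7) (by norm_num)
    have e3 : y ^ (1 / 2 : ℝ) ≤ y ^ (3 / 7 : ℝ) :=
      Real.rpow_le_rpow_of_exponent_ge hy h1.le (by norm_num)
    have p1 : 0 ≤ y ^ (3 / 7 : ℝ) := by positivity
    have p2 : 0 ≤ y ^ (5 / 7 : ℝ) := by positivity
    have p3 : 0 ≤ y ^ (1 / 2 : ℝ) := by positivity
    constructor
    · calc |0 - c₂ * y - c * y ^ (1 / 2 : ℝ)| ≤ |0 - c₂ * y| + |c * y ^ (1 / 2 : ℝ)| := abs_sub _ _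
        _ = |c₂| * y + |c| * y ^ (1 / 2 : ℝ) := by
            rw [zero_sub, abs_neg, abs_mul, abs_mul, abs_of_pos hy, abs_of_nonneg p3]
        _ ≤ _ := by nlinarith [mul_le_mul_of_nonneg_left e1 a1, mul_le_mul_of_nonneg_left e3 a2]
    · rw [zero_sub, abs_neg, abs_mul, abs_of_pos hy]
      nlinarith [mul_le_mul_of_nonneg_left e2 a1, mul_nonneg a2 p2]

lemma sum_conv (G : ℕ → ℝ) (M : ℕ) :
    ∑ m ∈ Ioc 0 M, ∑ x ∈ m.divisorsAntidiagonal, u x.1 * G x.2 =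
      ∑ d ∈ Ioc 0 M, G d * ∑ i ∈ Ioc 0 (M / d), u i := by
  let g : ArithmeticFunction ℝ := ⟨fun n => if n = 0 then 0 else G n, by simp⟩
  have e := sum_Ioc_mul_eq_sum_sum g u M
  have e1 : ∀ m, ∑ x ∈ m.divisorsAntidiagonal, u x.1 * G x.2 = (g * u) m := by
    intro m
    rw [mul_comm, ArithmeticFunction.mul_apply]
    refine Finset.sum_congr rfl fun x hx => ?_
    have : x.2 ≠ 0 := by
      simp only [Nat.mem_divisorsAntidiagonal] at hx
      rintro h; simp [h] at hx; omega
    simp [g, this]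
  simp only [e1, e]
  refine Finset.sum_congr rfl fun d hd => ?_
  have : d ≠ 0 := (mem_Ioc.mp hd).1.ne'
  simp [g, this]

lemma S_eq (t : ℕ → ℝ) (x : ℝ) :
    ∑ m ∈ Icc 1 ⌊x⌋₊, ∑ n ∈ Icc 1 ⌊x⌋₊, t (m * n) =
      ∑ d ∈ Ioc 0 ⌊x⌋₊, ∑ e ∈ Ioc 0 ⌊x⌋₊, h t d e * (D (x / d) * D (x / e)) := by
  have hI : Icc 1 ⌊x⌋₊ = Ioc 0 ⌊x⌋₊ := by ext; simp [Nat.one_le_iff_ne_zero, Nat.pos_iff_ne_zero]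
  rw [hI]
  simp only [D, Nat.floor_div_natCast]
  set M := ⌊x⌋₊
  calc ∑ m ∈ Ioc 0 M, ∑ n ∈ Ioc 0 M, t (m * n)
      = ∑ m ∈ Ioc 0 M, ∑ n ∈ Ioc 0 M, ∑ x ∈ m.divisorsAntidiagonal,
          ∑ y ∈ n.divisorsAntidiagonal, u x.1 * u y.1 * h t x.2 y.2 := by
        refine Finset.sum_congr rfl fun m hm => Finset.sum_congr rfl fun n hn => ?_
        rw [h_inv t (mem_Ioc.mp hm).1.ne' (mem_Ioc.mp hn).1.ne']
    _ = ∑ m ∈ Ioc 0 M, ∑ x ∈ m.divisorsAntidiagonal, u x.1 *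
          (∑ n ∈ Ioc 0 M, ∑ y ∈ n.divisorsAntidiagonal, u y.1 * h t x.2 y.2) := by
        refine Finset.sum_congr rfl fun m _ => ?_
        rw [Finset.sum_comm]
        simp only [Finset.mul_sum, mul_assoc]
    _ = _ := by
        rw [sum_conv (fun d => ∑ n ∈ Ioc 0 M, ∑ y ∈ n.divisorsAntidiagonal, u y.1 * h t d y.2)]
        refine Finset.sum_congr rfl fun d _ => ?_
        rw [sum_conv (fun e => h t d e), Finset.sum_mul]
        refine Finset.sum_congr rfl fun e _ => ?_
        ring

lemma S_hasSum (t : ℕ → ℝ) (x : ℝ) (hx : 0 ≤ x) :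
    HasSum (fun z : ℕ × ℕ => h t z.1 z.2 * (D (x / z.1) * D (x / z.2)))
      (∑ m ∈ Icc 1 ⌊x⌋₊, ∑ n ∈ Icc 1 ⌊x⌋₊, t (m * n)) := by
  rw [S_eq, ← Finset.sum_product' (f := fun d e : ℕ => h t d e * (D (x / d) * D (x / e)))]
  apply hasSum_sum_of_ne_finset_zero
  have key : ∀ d : ℕ, d ∉ Ioc 0 ⌊x⌋₊ → D (x / d) = 0 := by
    intro d hd
    apply D_lt_one
    rcases Nat.eq_zero_or_pos d with rfl | hpos
    · simp
    · have : ⌊x⌋₊ < d := by simp only [mem_Ioc, not_and, not_le] at hd; exact hd hpos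
      rw [div_lt_one (by exact_mod_cast hpos)]
      exact (Nat.floor_lt hx).mp this
  intro z hz
  rw [mem_product, not_and_or] at hz
  rcases hz with hz | hz <;> simp [key _ hz]

lemma h_zero (t : ℕ → ℝ) {d e : ℕ} (hde : d = 0 ∨ e = 0) : h t d e = 0 := by
  rcases hde with h0 | h0 <;> simp [h, N, h0]

theorem main_bound (t : ℕ → ℝ) (hmul : ∀ m n : ℕ, Nat.Coprime m n → t (m * n) = t m * t n)
    (ht : ∀ p a : ℕ, p.Prime → t (p ^ a) = tt a) :
    ∃ C₁ C₂ C : ℝ, ∀ x : ℝ, 0 < x →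
      |(∑ m ∈ Icc 1 ⌊x⌋₊, ∑ n ∈ Icc 1 ⌊x⌋₊, t (m * n)) - C₁ * x ^ 2 - C₂ * x ^ ((3 : ℝ) / 2)|
        ≤ C * x ^ (10 / 7 : ℝ) := by
  obtain ⟨c₂, c, K, hK, hD⟩ := D_bounds
  have hS := wt_summable t hmul ht
  -- signed sums
  have hS' : ∀ α β : ℝ, 3 / 7 ≤ α → 3 / 7 ≤ β → 10 / 7 ≤ α + β →
      Summable (fun z : ℕ × ℕ => h t z.1 z.2 * ((z.1 : ℝ) ^ (-α) * (z.2 : ℝ) ^ (-β))) := by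
    intro α β h1 h2 h3
    refine Summable.of_norm ((hS α β h1 h2 h3).congr fun z => ?_)
    rw [wt, norm_mul, Real.norm_eq_abs, Real.norm_of_nonneg (by positivity), mul_assoc]
  have s1 := (hS' 1 1 (by norm_num) (by norm_num) (by norm_num)).hasSum
  have s2 := (hS' 1 (1 / 2) (by norm_num) (by norm_num) (by norm_num)).hasSum
  have s3 := (hS' (1 / 2) 1 (by norm_num) (by norm_num) (by norm_num)).hasSum
  have w1 := (hS 1 (3 / 7) (by norm_num) (by norm_num) (by norm_num)).hasSum
  have w2 := (hS (3 / 7) 1 (by norm_num) (by norm_num) (by norm_num)).hasSum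
  have w3 := (hS (5 / 7) (5 / 7) (by norm_num) (by norm_num) (by norm_num)).hasSum
  set T1 := ∑' z : ℕ × ℕ, h t z.1 z.2 * ((z.1 : ℝ) ^ (-1 : ℝ) * (z.2 : ℝ) ^ (-1 : ℝ))
  set T2 := ∑' z : ℕ × ℕ, h t z.1 z.2 * ((z.1 : ℝ) ^ (-1 : ℝ) * (z.2 : ℝ) ^ (-(1 / 2) : ℝ))
  set T3 := ∑' z : ℕ × ℕ, h t z.1 z.2 * ((z.1 : ℝ) ^ (-(1 / 2) : ℝ) * (z.2 : ℝ) ^ (-1 : ℝ))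
  set W1 := ∑' z : ℕ × ℕ, wt t 1 (3 / 7) z.1 z.2
  set W2 := ∑' z : ℕ × ℕ, wt t (3 / 7) 1 z.1 z.2
  set W3 := ∑' z : ℕ × ℕ, wt t (5 / 7) (5 / 7) z.1 z.2
  refine ⟨c₂ ^ 2 * T1, c₂ * c * (T2 + T3), |c₂| * K * (W1 + W2) + K ^ 2 * W3, fun x hx => ?_⟩
  have hsum := ((S_hasSum t x hx.le).sub (s1.mul_right (c₂ ^ 2 * x ^ 2))).sub
    ((s2.add s3).mul_right (c₂ * c * x ^ ((3 : ℝ) / 2)))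
  have wsum := (((w1.add w2).mul_right (|c₂| * K * x ^ (10 / 7 : ℝ))).add
    (w3.mul_right (K ^ 2 * x ^ (10 / 7 : ℝ))))
  have hb := tsum_of_norm_bounded wsum (f := fun z : ℕ × ℕ => h t z.1 z.2 * (D (x / z.1) * D (x / z.2)) -
    h t z.1 z.2 * ((z.1 : ℝ) ^ (-1 : ℝ) * (z.2 : ℝ) ^ (-1 : ℝ)) * (c₂ ^ 2 * x ^ 2) -
    (h t z.1 z.2 * ((z.1 : ℝ) ^ (-1 : ℝ) * (z.2 : ℝ) ^ (-(1 / 2) : ℝ)) +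
      h t z.1 z.2 * ((z.1 : ℝ) ^ (-(1 / 2) : ℝ) * (z.2 : ℝ) ^ (-1 : ℝ))) *
      (c₂ * c * x ^ ((3 : ℝ) / 2))) ?_
  · rw [hsum.tsum_eq, Real.norm_eq_abs] at hb
    calc _ = _ := by congr 1; ring
      _ ≤ _ := hb
      _ = _ := by ring
  · rintro ⟨d, e⟩
    dsimp only
    by_cases h0 : d = 0 ∨ e = 0
    · simp [wt, h_zero t h0]
    push Not at h0
    have hd : (0:ℝ) < d := by exact_mod_cast Nat.pos_of_ne_zero h0.1
    have he : (0:ℝ) < e := by exact_mod_cast Nat.pos_of_ne_zero h0.2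
    obtain ⟨d1, d2⟩ := hD (x / d) (by positivity)
    obtain ⟨e1, e2⟩ := hD (x / e) (by positivity)
    have hpow : ∀ (r : ℝ) {a : ℝ}, 0 < a → (x / a) ^ r = x ^ r * a ^ (-r) := by
      intro r a ha
      rw [Real.div_rpow hx.le ha.le, Real.rpow_neg ha.le]; rfl
    have hone : ∀ {a : ℝ}, x / a = x * a ^ (-1 : ℝ) := by
      intro a; rw [Real.rpow_neg_one]; rfl
    set Dd := D (x / d)
    set De := D (x / e)
    have X1 : x ^ ((3 : ℝ) / 2) = x * x ^ (1 / 2 : ℝ) := by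
      rw [← Real.rpow_one_add' hx.le (by norm_num)]; norm_num
    have X2 : x ^ (10 / 7 : ℝ) = x * x ^ (3 / 7 : ℝ) := by
      rw [← Real.rpow_one_add' hx.le (by norm_num)]; norm_num
    have X3 : x ^ (10 / 7 : ℝ) = x ^ (5 / 7 : ℝ) * x ^ (5 / 7 : ℝ) := by
      rw [← Real.rpow_add hx]; norm_num
    have main : |Dd * De - c₂ ^ 2 * ((x / d) * (x / e)) -
        c₂ * c * ((x / d) * (x / e) ^ (1 / 2 : ℝ) + (x / d) ^ (1 / 2 : ℝ) * (x / e))| ≤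
        |c₂| * K * ((x / d) * (x / e) ^ (3 / 7 : ℝ) + (x / d) ^ (3 / 7 : ℝ) * (x / e)) +
        K ^ 2 * ((x / d) ^ (5 / 7 : ℝ) * (x / e) ^ (5 / 7 : ℝ)) := by
      have py : 0 < x / d := by positivity
      have pz : 0 < x / e := by positivity
      set y := x / (d:ℝ)
      set z := x / (e:ℝ)
      have id : Dd * De - c₂ ^ 2 * (y * z) - c₂ * c * (y * z ^ (1 / 2 : ℝ) + y ^ (1 / 2 : ℝ) * z) =
        c₂ * y * (De - c₂ * z - c * z ^ (1 / 2 : ℝ)) + c₂ * z * (Dd - c₂ * y - c * y ^ (1 / 2 : ℝ)) +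
        (Dd - c₂ * y) * (De - c₂ * z) := by ring
      rw [id]
      refine (abs_add_three _ _ _).trans ?_
      have b1 : |c₂ * y * (De - c₂ * z - c * z ^ (1 / 2 : ℝ))| ≤ |c₂| * y * (K * z ^ (3 / 7 : ℝ)) := by
        rw [abs_mul, abs_mul, abs_of_pos py]; gcongr
      have b2 : |c₂ * z * (Dd - c₂ * y - c * y ^ (1 / 2 : ℝ))| ≤ |c₂| * z * (K * y ^ (3 / 7 : ℝ)) := by
        rw [abs_mul, abs_mul, abs_of_pos pz]; gcongr
      have b3 : |(Dd - c₂ * y) * (De - c₂ * z)| ≤ (K * y ^ (5 / 7 : ℝ)) * (K * z ^ (5 / 7 : ℝ)) := by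
        rw [abs_mul]; gcongr
      calc _ ≤ _ := add_le_add (add_le_add b1 b2) b3
        _ = _ := by ring
    rw [hpow _ hd, hpow _ hd, hpow _ hd, hpow _ he, hpow _ he, hpow _ he, hone (a := (d:ℝ)),
      hone (a := (e:ℝ))] at main
    have main' := mul_le_mul_of_nonneg_left main (abs_nonneg (h t d e))
    rw [← abs_mul] at main'
    rw [Real.norm_eq_abs]
    calc _ = _ := by congr 1; rw [X1]; ring
      _ ≤ _ := main'
      _ = _ := by
        unfold wt
        rw [show K ^ 2 * x ^ (10 / 7 : ℝ) = K ^ 2 * (x ^ (5 / 7 : ℝ) * x ^ (5 / 7 : ℝ)) by rw [X3], X2]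
        ring

end ExpDiv

/-- If `τᵉ` is the multiplicative function with `τᵉ(p^a) = τ(a)` for all primes `p` and `a ≥ 1`
(and `τᵉ(1) = 1`), then `∑_{m,n ≤ x} τᵉ(mn) = C₁ x² + C₂ x^{3/2} + O(x^{10/7+ε})`. -/
theorem sum_exponential_divisor_mul_asymptotic (τe : ℕ → ℝ)
    (h1 : τe 1 = 1)
    (hmul : ∀ m n : ℕ, Nat.Coprime m n → τe (m * n) = τe m * τe n)
    (hpp : ∀ p a : ℕ, p.Prime → 1 ≤ a → τe (p ^ a) = (Nat.divisors a).card) :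
    ∃ C₁ C₂ : ℝ, ∀ ε > (0 : ℝ),
      (fun x : ℝ =>
          (∑ m ∈ Finset.Icc 1 ⌊x⌋₊, ∑ n ∈ Finset.Icc 1 ⌊x⌋₊, τe (m * n)) -
            C₁ * x ^ 2 - C₂ * x ^ ((3 : ℝ) / 2)) =O[atTop]
        fun x : ℝ => x ^ (10 / 7 + ε) := by
  have ht : ∀ p a : ℕ, p.Prime → τe (p ^ a) = ExpDiv.tt a := by
    intro p a hp
    unfold ExpDiv.tt
    split_ifs with ha
    · rw [ha, pow_zero, h1]
    · exact hpp p a hp (Nat.one_le_iff_ne_zero.mpr ha)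
  obtain ⟨C₁, C₂, C, hC⟩ := ExpDiv.main_bound τe hmul ht
  refine ⟨C₁, C₂, fun ε hε => ?_⟩
  refine IsBigO.of_bound |C| ?_
  filter_upwards [eventually_ge_atTop (1 : ℝ)] with x hx
  have hx0 : 0 < x := by linarith
  rw [Real.norm_eq_abs, Real.norm_of_nonneg (by positivity)]
  calc _ ≤ C * x ^ (10 / 7 : ℝ) := hC x hx0
    _ ≤ |C| * x ^ (10 / 7 : ℝ) := by gcongr; exact le_abs_self C
    _ ≤ |C| * x ^ (10 / 7 + ε) := by
        gcongr
        linarith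
end
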